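/- arXiv:2512.20850 — 7 statements merged into one kernel-verified Lean document; each statement's English description precedes it below -/
import Mathlib

section
/- Every weakly chained diagonally dominant real M×M matrix is nonsingular. -/
open Finset

/-- Edge relation of the directed graph of a matrix: an edge from `i` to `j` (with `i ≠ j`)
whenever `A i j ≠ 0`. -/
def Matrix.GraphEdge {M : ℕ} (A : Matrix (Fin M) (Fin M) ℝ) (i j : Fin M) : Prop :=
  i ≠ j ∧ A i j ≠ 0

/-- Row `i` of `A` is strictly diagonally dominant: `|a_{ii}| > ∑_{j ≠ i} |a_{ij}|`. -/
def Matrix.SDDRow {M : ℕ} (A : Matrix (Fin M) (Fin M) ℝ) (i : Fin M) : Prop :=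
  ∑ j ∈ Finset.univ.erase i, |A i j| < |A i i|

/-- `A` is weakly diagonally dominant: `|a_{ii}| ≥ ∑_{j ≠ i} |a_{ij}|` for every row `i`. -/
def Matrix.WDD {M : ℕ} (A : Matrix (Fin M) (Fin M) ℝ) : Prop :=
  ∀ i, ∑ j ∈ Finset.univ.erase i, |A i j| ≤ |A i i|

/-- `A` is weakly chained diagonally dominant: it is weakly diagonally dominant and from
every row there is a (possibly empty) directed path in the graph of `A` to a strictly
diagonally dominant row. -/
def Matrix.WCDD {M : ℕ} (A : Matrix (Fin M) (Fin M) ℝ) : Prop :=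
  A.WDD ∧ ∀ i, ∃ j, Relation.ReflTransGen A.GraphEdge i j ∧ A.SDDRow j

/-- Every weakly chained diagonally dominant real `M × M` matrix is nonsingular. -/
theorem wcdd_nonsingular {M : ℕ} (A : Matrix (Fin M) (Fin M) ℝ) (hA : A.WCDD) :
    A.det ≠ 0 := by
  intro hdet
  obtain ⟨v, hv0, hv⟩ := Matrix.exists_mulVec_eq_zero_iff.mpr hdet
  obtain ⟨k, hk⟩ := Function.ne_iff.mp hv0
  obtain ⟨i₀, -, hi₀⟩ := Finset.exists_max_image Finset.univ (fun i => |v i|) ⟨k, Finset.mem_univ k⟩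
  have hmax : ∀ j, |v j| ≤ |v i₀| := fun j => hi₀ j (Finset.mem_univ j)
  have hpos : 0 < |v i₀| := lt_of_lt_of_le (abs_pos.mpr hk) (hmax k)
  have key : ∀ i, |v i| = |v i₀| →
      |A i i| * |v i₀| ≤ ∑ j ∈ Finset.univ.erase i, |A i j| * |v j| := by
    intro i hi
    have h0 : ∑ j, A i j * v j = 0 := congrFun hv i
    rw [← Finset.add_sum_erase _ _ (Finset.mem_univ i)] at h0
    have h1 : A i i * v i = - ∑ j ∈ Finset.univ.erase i, A i j * v j := by linarith
    rw [← hi, ← abs_mul, h1, abs_neg]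
    refine (Finset.abs_sum_le_sum_abs _ _).trans (le_of_eq ?_)
    simp only [abs_mul]
  have hle : ∀ i, ∀ j ∈ Finset.univ.erase i, |A i j| * |v j| ≤ |A i j| * |v i₀| :=
    fun i j _ => mul_le_mul_of_nonneg_left (hmax j) (abs_nonneg _)
  obtain ⟨t, hpath, hsdd⟩ := hA.2 i₀
  have ht : |v t| = |v i₀| := by
    clear hsdd
    induction hpath with
    | refl => rfl
    | @tail b c _ hbc ih =>
      by_contra hne
      have hlt : |v c| < |v i₀| := lt_of_le_of_ne (hmax c) hne
      have h2 : ∑ j ∈ Finset.univ.erase b, |A b j| * |v j| <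
          ∑ j ∈ Finset.univ.erase b, |A b j| * |v i₀| :=
        Finset.sum_lt_sum (hle b) ⟨c, Finset.mem_erase.mpr ⟨hbc.1.symm, Finset.mem_univ c⟩,
          mul_lt_mul_of_pos_left hlt (abs_pos.mpr hbc.2)⟩
      rw [← Finset.sum_mul] at h2
      have h3 := mul_le_mul_of_nonneg_right (hA.1 b) hpos.le
      linarith [key b ih]
  have h2 := Finset.sum_le_sum (hle t)
  rw [← Finset.sum_mul] at h2
  have h3 := mul_lt_mul_of_pos_right hsdd hpos
  linarith [key t ht]
end

section
/- If a real M×M matrix A is a weakly chained diagonally dominant Z-matrix with nonnegative diagonal entries, then A is nonsingular and every entry of A⁻¹ is nonnegative. -/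
open Finset

/-- `A` is a Z-matrix: `a_{ij} ≤ 0` whenever `i ≠ j`. -/
def Matrix.ZMat {M : ℕ} (A : Matrix (Fin M) (Fin M) ℝ) : Prop :=
  ∀ i j, i ≠ j → A i j ≤ 0

/-- Key step: at a negative minimum with nonnegative image, the row is not strictly dominant
and the minimum propagates along edges. -/
theorem wcdd_step {M : ℕ} (A : Matrix (Fin M) (Fin M) ℝ)
    (hW : A.WDD) (hZ : A.ZMat) (hdiag : ∀ i, 0 ≤ A i i) (v : Fin M → ℝ) (m : ℝ) (hm : m < 0)
    (hmin : ∀ j, m ≤ v j) (i : Fin M) (hi : v i = m) (hAv : 0 ≤ A.mulVec v i) :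
    ¬ A.SDDRow i ∧ ∀ j, A.GraphEdge i j → v j = m := by
  have habs : ∑ j ∈ Finset.univ.erase i, |A i j| = - ∑ j ∈ Finset.univ.erase i, A i j := by
    rw [← Finset.sum_neg_distrib]
    refine Finset.sum_congr rfl fun j hj => ?_
    exact abs_of_nonpos (hZ i j (Finset.ne_of_mem_erase hj).symm)
  have hexp : A.mulVec v i = m * (A i i + ∑ j ∈ Finset.univ.erase i, A i j)
      + ∑ j ∈ Finset.univ.erase i, A i j * (v j - m) := by
    have h1 : A.mulVec v i = ∑ j, A i j * v j := rfl
    rw [h1, ← Finset.add_sum_erase _ _ (Finset.mem_univ i), hi]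
    simp only [mul_sub, Finset.sum_sub_distrib, ← Finset.sum_mul]
    ring
  have hterm : ∀ j ∈ Finset.univ.erase i, A i j * (v j - m) ≤ 0 := fun j hj =>
    mul_nonpos_of_nonpos_of_nonneg (hZ i j (Finset.ne_of_mem_erase hj).symm)
      (sub_nonneg.2 (hmin j))
  have hsum := Finset.sum_nonpos hterm
  have hWi := hW i
  rw [habs, abs_of_nonneg (hdiag i)] at hWi
  constructor
  · intro hs
    unfold Matrix.SDDRow at hs
    rw [habs, abs_of_nonneg (hdiag i)] at hs
    have := mul_neg_of_neg_of_pos hm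
      (show 0 < A i i + ∑ j ∈ Finset.univ.erase i, A i j by linarith)
    linarith
  · intro j hj
    have h0 := mul_nonpos_of_nonpos_of_nonneg hm.le
      (show 0 ≤ A i i + ∑ j ∈ Finset.univ.erase i, A i j by linarith)
    have hz : ∑ j ∈ Finset.univ.erase i, A i j * (v j - m) = 0 := by linarith
    have := (Finset.sum_eq_zero_iff_of_nonpos hterm).1 hz j
      (Finset.mem_erase.2 ⟨hj.1.symm, Finset.mem_univ j⟩)
    rcases mul_eq_zero.1 this with h | h
    · exact absurd h hj.2
    · linarith

theorem wcdd_monotone {M : ℕ} (A : Matrix (Fin M) (Fin M) ℝ)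
    (hwcdd : A.WCDD) (hZ : A.ZMat) (hdiag : ∀ i, 0 ≤ A i i) (v : Fin M → ℝ)
    (hAv : ∀ i, 0 ≤ A.mulVec v i) (i : Fin M) : 0 ≤ v i := by
  by_contra hneg
  haveI : Nonempty (Fin M) := ⟨i⟩
  obtain ⟨k, hk⟩ := Finite.exists_min v
  have hm : v k < 0 := lt_of_le_of_lt (hk i) (not_le.1 hneg)
  have step := fun l hl => wcdd_step A hwcdd.1 hZ hdiag v (v k) hm hk l hl (hAv l)
  obtain ⟨j, hpath, hs⟩ := hwcdd.2 k
  have hall : ∀ l, Relation.ReflTransGen A.GraphEdge k l → v l = v k := by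
    intro l hl
    induction hl with
    | refl => rfl
    | tail _ he ih => exact (step _ ih).2 _ he
  exact (step j (hall j hpath)).1 hs

/-- A weakly chained diagonally dominant Z-matrix with nonnegative diagonal entries is
nonsingular and has an entrywise nonnegative inverse. -/
theorem wcdd_zmatrix_inverse_nonneg {M : ℕ} (A : Matrix (Fin M) (Fin M) ℝ)
    (hwcdd : A.WCDD) (hZ : A.ZMat) (hdiag : ∀ i, 0 ≤ A i i) :
    A.det ≠ 0 ∧ ∀ i j, 0 ≤ A⁻¹ i j := by
  have mono := wcdd_monotone A hwcdd hZ hdiag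
  have hdet : A.det ≠ 0 := by
    intro h
    obtain ⟨v, hv, hAv⟩ := Matrix.exists_mulVec_eq_zero_iff.2 h
    apply hv
    funext i
    have h1 := mono v (fun i => by simp [hAv]) i
    have h2 := mono (-v) (fun i => by simp [Matrix.mulVec_neg, hAv]) i
    simp only [Pi.neg_apply] at h2
    simp only [Pi.zero_apply]
    linarith
  refine ⟨hdet, fun i j => ?_⟩
  refine mono (fun l => A⁻¹ l j) (fun l => ?_) i
  have h1 : A.mulVec (fun l => A⁻¹ l j) l = (A * A⁻¹) l j := rfl
  rw [h1, Matrix.mul_nonsing_inv A (isUnit_iff_ne_zero.2 hdet), Matrix.one_apply]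
  split_ifs <;> norm_num
end

section
/- For every grid point (i, j) with d(i, j) = 1 there is a directed path along the edges (i, j) → (i, j + z(i, j)) (taken only at points where d = 1 would allow continuation, i.e., following the impulse moves) from (i, j) to some grid point (i, j′) with d(i, j′) = 0. Precisely: define a directed graph on G with an edge from (i, j) to (i, j + z(i, j)) for every (i, j) ∈ G with |j + z(i, j)| ≤ Q̄; then from every (i, j) with d(i, j) = 1 there is a directed path in this graph to some (i, j′) with d(i, j′) = 0. -/
/-- Let `G = {(i, j) : |i| ≤ N_α, |j| ≤ Q̄} ⊆ ℤ × ℤ`, `d : G → {0,1}` an impulse indicator and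
`z : G → {1, −1}` an impulse direction satisfying the admissibility conditions:
(a) `d = 1, z = 1` forces `j < Q̄`; (b) `d = 1, z = −1` forces `j > −Q̄`; (c) there is no point
with `d(i,j) = 1, z(i,j) = 1, d(i,j+1) = 1, z(i,j+1) = −1`.  Consider the directed graph on `G`
with an edge from `(i, j)` to `(i, j + z(i,j))` whenever `|j + z(i,j)| ≤ Q̄`.  Then from every
grid point with `d = 1` there is a directed path in this graph to a grid point with `d = 0`. -/
theorem impulse_graph_reaches_no_impulse (Nα : ℕ) (Qb : ℤ) (hQ : 1 ≤ Qb)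
    (d : ℤ × ℤ → Bool) (z : ℤ × ℤ → ℤ)
    (hz : ∀ p : ℤ × ℤ, z p = 1 ∨ z p = -1)
    (ha : ∀ p : ℤ × ℤ, |p.1| ≤ (Nα : ℤ) → |p.2| ≤ Qb → d p = true → z p = 1 → p.2 < Qb)
    (hb : ∀ p : ℤ × ℤ, |p.1| ≤ (Nα : ℤ) → |p.2| ≤ Qb → d p = true → z p = -1 → -Qb < p.2)
    (hc : ∀ p : ℤ × ℤ, |p.1| ≤ (Nα : ℤ) → |p.2| ≤ Qb →
      ¬(d p = true ∧ z p = 1 ∧ d (p.1, p.2 + 1) = true ∧ z (p.1, p.2 + 1) = -1)) :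
    ∀ p : ℤ × ℤ, |p.1| ≤ (Nα : ℤ) → |p.2| ≤ Qb → d p = true →
      ∃ p' : ℤ × ℤ,
        Relation.ReflTransGen
          (fun a b : ℤ × ℤ => |a.1| ≤ (Nα : ℤ) ∧ |a.2| ≤ Qb ∧
            b = (a.1, a.2 + z a) ∧ |a.2 + z a| ≤ Qb) p p' ∧
        |p'.1| ≤ (Nα : ℤ) ∧ |p'.2| ≤ Qb ∧ d p' = false := by
  have up : ∀ n : ℕ, ∀ i j : ℤ, |i| ≤ (Nα : ℤ) → |j| ≤ Qb → d (i, j) = true → z (i, j) = 1 →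
      Qb - j ≤ n → ∃ p' : ℤ × ℤ,
        Relation.ReflTransGen
          (fun a b : ℤ × ℤ => |a.1| ≤ (Nα : ℤ) ∧ |a.2| ≤ Qb ∧
            b = (a.1, a.2 + z a) ∧ |a.2 + z a| ≤ Qb) (i, j) p' ∧
        |p'.1| ≤ (Nα : ℤ) ∧ |p'.2| ≤ Qb ∧ d p' = false := by
    intro n
    induction n with
    | zero =>
      intro i j hi hj hd h1 hn
      have := ha (i, j) hi hj hd h1
      simp only at this
      push_cast at hn
      omega
    | succ n ih =>
      intro i j hi hj hd h1 hn
      have hlt := ha (i, j) hi hj hd h1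
      simp only at hlt
      push_cast at hn
      have hj' : |j + 1| ≤ Qb := by
        rw [abs_le] at hj ⊢
        omega
      have edge : |i| ≤ (Nα : ℤ) ∧ |j| ≤ Qb ∧
          (i, j + 1) = (i, j + z (i, j)) ∧ |j + z (i, j)| ≤ Qb := by
        rw [h1]
        exact ⟨hi, hj, rfl, hj'⟩
      cases hd' : d (i, j + 1) with
      | false => exact ⟨(i, j + 1), Relation.ReflTransGen.single edge, hi, hj', hd'⟩
      | true =>
        rcases hz (i, j + 1) with h | h
        · obtain ⟨p', hp, h3⟩ := ih i (j + 1) hi hj' hd' h (by omega)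
          exact ⟨p', Relation.ReflTransGen.head edge hp, h3⟩
        · exact absurd ⟨hd, h1, hd', h⟩ (hc (i, j) hi hj)
  have down : ∀ n : ℕ, ∀ i j : ℤ, |i| ≤ (Nα : ℤ) → |j| ≤ Qb → d (i, j) = true →
      z (i, j) = -1 → Qb + j ≤ n → ∃ p' : ℤ × ℤ,
        Relation.ReflTransGen
          (fun a b : ℤ × ℤ => |a.1| ≤ (Nα : ℤ) ∧ |a.2| ≤ Qb ∧
            b = (a.1, a.2 + z a) ∧ |a.2 + z a| ≤ Qb) (i, j) p' ∧
        |p'.1| ≤ (Nα : ℤ) ∧ |p'.2| ≤ Qb ∧ d p' = false := by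
    intro n
    induction n with
    | zero =>
      intro i j hi hj hd h1 hn
      have := hb (i, j) hi hj hd h1
      simp only at this
      push_cast at hn
      omega
    | succ n ih =>
      intro i j hi hj hd h1 hn
      have hlt := hb (i, j) hi hj hd h1
      simp only at hlt
      push_cast at hn
      have hj' : |j + -1| ≤ Qb := by
        rw [abs_le] at hj ⊢
        omega
      have edge : |i| ≤ (Nα : ℤ) ∧ |j| ≤ Qb ∧
          (i, j + -1) = (i, j + z (i, j)) ∧ |j + z (i, j)| ≤ Qb := by
        rw [h1]
        exact ⟨hi, hj, rfl, hj'⟩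
      cases hd' : d (i, j + -1) with
      | false => exact ⟨(i, j + -1), Relation.ReflTransGen.single edge, hi, hj', hd'⟩
      | true =>
        rcases hz (i, j + -1) with h | h
        · have e : j + -1 + 1 = j := by ring
          refine absurd ⟨hd', h, ?_, ?_⟩ (hc (i, j + -1) hi hj')
          · simp only [e]
            exact hd
          · simp only [e]
            exact h1
        · obtain ⟨p', hp, h3⟩ := ih i (j + -1) hi hj' hd' h (by omega)
          exact ⟨p', Relation.ReflTransGen.head edge hp, h3⟩
  rintro ⟨i, j⟩ hi hj hd
  rcases hz (i, j) with h | h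
  · exact up (Qb - j).toNat i j hi hj hd h (Int.self_le_toNat _)
  · exact down (Qb + j).toNat i j hi hj hd h (Int.self_le_toNat _)
end

section
/- Monotonicity of the implicit scheme: fix n < N and a grid point (αᵢ, q), and let u, w be grid functions with u(t_m, αⱼ, q′) ≥ w(t_m, αⱼ, q′) at every grid point and u(t_n, αᵢ, q) = w(t_n, αᵢ, q). Define, for a grid function v, S[v] := max( max over admissible lᵃ, lᵇ ∈ {0,1} of ( (v(t_{n+1}, αᵢ, q) − v(t_n, αᵢ, q))/δt + L_δ^{lᵃ,lᵇ}v(t_n, αᵢ, q) + f̃^{lᵃ,lᵇ}(t_n, αᵢ, q) ), max over admissible z ∈ {1,−1} of ( B_δ^z v(t_n, αᵢ, q) − Υ ) ). Then S[u] ≥ S[w]. -/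
open Finset

noncomputable section

/-- Clamped linear interpolation on the α-grid `{i·δα : i ∈ ℤ, |i| ≤ Nα}` of a function `f`
on the grid indices: the argument `α` is clamped to `[−A, A]` with `A = Nα·δα` and the value
is then linearly interpolated between the two neighbouring grid points. -/
def interp (δα : ℝ) (Nα : ℕ) (f : ℤ → ℝ) (α : ℝ) : ℝ :=
  let A : ℝ := (Nα : ℝ) * δα
  let β : ℝ := max (-A) (min A α)
  let i0 : ℤ := min ⌊β / δα⌋ ((Nα : ℤ) - 1)
  let θ : ℝ := β / δα - (i0 : ℝ)
  (1 - θ) * f i0 + θ * f (i0 + 1)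

/-- The discrete generator `L_δ^{lᵃ,lᵇ}` acting on a time slice `v` of a grid function,
evaluated at the grid point `(αᵢ, q) = (i·δα, q)`.  Values at off-grid points `αᵢ ± δα`,
`αᵢ + γᵃ`, `αᵢ − γᵇ` are obtained by the clamping-and-interpolation rule, and the
second-difference term is set to zero at the boundary rows `i = ±Nα`. -/
def Lδ (δα k ρ lamA lamB γa γb : ℝ) (Nα : ℕ) (la lb : Bool)
    (v : ℤ → ℤ → ℝ) (i q : ℤ) : ℝ :=
  let α : ℝ := (i : ℝ) * δα
  let V : ℝ → ℤ → ℝ := fun a q' => interp δα Nα (fun j => v j q') a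
  k * max (-α) 0 * (V (α + δα) q - v i q) / δα
    - k * max α 0 * (v i q - V (α - δα) q) / δα
    + (if |i| < (Nα : ℤ) then
        ρ ^ 2 / 2 * (V (α + δα) q - 2 * v i q + V (α - δα) q) / δα ^ 2
      else 0)
    + lamA * ((if la then V (α + γa) (q - 1) else V (α + γa) q) - v i q)
    + lamB * ((if lb then V (α - γb) (q + 1) else V (α - γb) q) - v i q)

/-- The running reward `f̃^{lᵃ,lᵇ}(t, α, q) = α·σ·q − φ·q² + 1_{lᵃ=1}·λᵃ·Δ + 1_{lᵇ=1}·λᵇ·Δ`. -/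
def ftil (σ φ Δ lamA lamB : ℝ) (la lb : Bool) (α : ℝ) (q : ℤ) : ℝ :=
  α * σ * (q : ℝ) - φ * (q : ℝ) ^ 2
    + (if la then lamA * Δ else 0) + (if lb then lamB * Δ else 0)

/-- `S[v]` at the grid node `(t_n, αᵢ, q)`: the maximum (= `sSup` of the finite nonempty set
of candidates) over all admissible limit controls `lᵃ, lᵇ ∈ {0,1}` of
`(v(t_{n+1},αᵢ,q) − v(t_n,αᵢ,q))/δt + L_δ^{lᵃ,lᵇ}v(t_n,αᵢ,q) + f̃^{lᵃ,lᵇ}(t_n,αᵢ,q)`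
and over all admissible impulses `z ∈ {1,−1}` of `B_δ^z v(t_n,αᵢ,q) − Υ`. -/
def SchemeVal (δt δα σ Δ Υ lamA lamB k ρ γa γb φ : ℝ) (Nα : ℕ) (Qb : ℤ)
    (n : ℕ) (i q : ℤ) (v : ℕ → ℤ → ℤ → ℝ) : ℝ :=
  sSup
    ({x : ℝ | ∃ la lb : Bool, (la = true → -Qb < q) ∧ (lb = true → q < Qb) ∧
        x = (v (n + 1) i q - v n i q) / δt
          + Lδ δα k ρ lamA lamB γa γb Nα la lb (v n) i q
          + ftil σ φ Δ lamA lamB la lb ((i : ℝ) * δα) q} ∪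
      {x : ℝ | ∃ z : ℤ, (z = 1 ∨ z = -1) ∧ (z = 1 → q < Qb) ∧ (z = -1 → -Qb < q) ∧
        x = v n i (q + z) - v n i q - Υ})

theorem interp_mono (δα : ℝ) (Nα : ℕ) (hδα : 0 < δα) (hN : 1 ≤ Nα) (f g : ℤ → ℝ) (α : ℝ)
    (h : ∀ j : ℤ, |j| ≤ (Nα : ℤ) → f j ≤ g j) : interp δα Nα f α ≤ interp δα Nα g α := by
  let A : ℝ := (Nα : ℝ) * δα
  let β : ℝ := max (-A) (min A α)
  let i0 : ℤ := min ⌊β / δα⌋ ((Nα : ℤ) - 1)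
  let θ : ℝ := β / δα - (i0 : ℝ)
  change (1 - θ) * f i0 + θ * f (i0 + 1) ≤ (1 - θ) * g i0 + θ * g (i0 + 1)
  have hA : 0 ≤ A := by positivity
  have hβ1 : -A ≤ β := le_max_left _ _
  have hβ2 : β ≤ A := max_le (by linarith) (min_le_left _ _)
  have h1 : -(Nα : ℝ) ≤ β / δα := by
    rw [le_div_iff₀ hδα]
    have : -(Nα : ℝ) * δα = -A := by simp [A]
    linarith
  have h2 : β / δα ≤ (Nα : ℝ) := by
    rw [div_le_iff₀ hδα]
    exact hβ2
  have hf : -(Nα : ℤ) ≤ ⌊β / δα⌋ := by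
    rw [Int.le_floor]
    push_cast
    exact h1
  have hi1 : -(Nα : ℤ) ≤ i0 := le_min hf (by omega)
  have hi2 : i0 ≤ (Nα : ℤ) - 1 := min_le_right _ _
  have hi3 : i0 ≤ ⌊β / δα⌋ := min_le_left _ _
  have hθ0 : 0 ≤ θ := by
    have : (i0 : ℝ) ≤ β / δα := Int.le_floor.mp hi3
    simp only [θ]
    linarith
  have hθ1 : 0 ≤ 1 - θ := by
    have : β / δα ≤ (i0 : ℝ) + 1 := by
      rcases min_choice ⌊β / δα⌋ ((Nα : ℤ) - 1) with hc | hc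
      · have hc' : i0 = ⌊β / δα⌋ := hc
        rw [hc']
        exact (Int.lt_floor_add_one _).le
      · have hc' : i0 = (Nα : ℤ) - 1 := hc
        rw [hc']
        push_cast
        linarith
    simp only [θ]
    linarith
  have e1 := mul_le_mul_of_nonneg_left (h i0 (abs_le.mpr ⟨hi1, by omega⟩)) hθ1
  have e2 := mul_le_mul_of_nonneg_left (h (i0 + 1) (abs_le.mpr ⟨by omega, by omega⟩)) hθ0
  linarith

/-- Monotonicity of the implicit scheme: if `u ≥ w` at every grid point and
`u(t_n, αᵢ, q) = w(t_n, αᵢ, q)` at a fixed grid node with `n < N`, then `S[u] ≥ S[w]`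
at that node. -/
theorem scheme_monotone
    (T A δt δα σ Δ ε Υ lamA lamB k ρ γa γb φ ψ : ℝ) (N Nα : ℕ) (Qb : ℤ)
    (hT : 0 < T) (hA : 0 < A) (hQ : 1 ≤ Qb) (hσ : 0 < σ) (hΔ : 0 ≤ Δ) (hε : 0 < ε)
    (hΥ : Υ = Δ + ε) (hlamA : 0 < lamA) (hlamB : 0 < lamB) (hk : 0 < k) (hρ : 0 < ρ)
    (hγa : 0 < γa) (hγb : 0 < γb) (hφ : 0 < φ) (hψ : 0 < ψ)
    (hN : 0 < N) (hδt : δt = T / N) (hδα : 0 < δα) (hNα : (Nα : ℝ) * δα = A)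
    (u w : ℕ → ℤ → ℤ → ℝ) (n : ℕ) (hn : n < N) (i q : ℤ)
    (hi : |i| ≤ (Nα : ℤ)) (hq : |q| ≤ Qb)
    (huw : ∀ m : ℕ, m ≤ N → ∀ j q' : ℤ, |j| ≤ (Nα : ℤ) → |q'| ≤ Qb →
      w m j q' ≤ u m j q')
    (heq : u n i q = w n i q) :
    SchemeVal δt δα σ Δ Υ lamA lamB k ρ γa γb φ Nα Qb n i q w ≤
      SchemeVal δt δα σ Δ Υ lamA lamB k ρ γa γb φ Nα Qb n i q u := by
  have hNα1 : 1 ≤ Nα := by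
    rcases Nat.eq_zero_or_pos Nα with h | h
    · subst h
      simp at hNα
      linarith
    · exact h
  have hδt0 : 0 < δt := by
    rw [hδt]
    positivity
  have hV : ∀ (a : ℝ) (q' : ℤ), |q'| ≤ Qb →
      interp δα Nα (fun j => w n j q') a ≤ interp δα Nα (fun j => u n j q') a :=
    fun a q' hq' => interp_mono δα Nα hδα hNα1 _ _ a (fun j hj => huw n hn.le j q' hj hq')
  have hq12 := abs_le.mp hq
  unfold SchemeVal
  apply csSup_le
  · exact ⟨_, Or.inl ⟨false, false, by simp, by simp, rfl⟩⟩
  have hbdd : BddAbove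
    ({x : ℝ | ∃ la lb : Bool, (la = true → -Qb < q) ∧ (lb = true → q < Qb) ∧
        x = (u (n + 1) i q - u n i q) / δt
          + Lδ δα k ρ lamA lamB γa γb Nα la lb (u n) i q
          + ftil σ φ Δ lamA lamB la lb ((i : ℝ) * δα) q} ∪
      {x : ℝ | ∃ z : ℤ, (z = 1 ∨ z = -1) ∧ (z = 1 → q < Qb) ∧ (z = -1 → -Qb < q) ∧
        x = u n i (q + z) - u n i q - Υ}) := by
    apply BddAbove.union
    · refine ((Set.finite_range (fun p : Bool × Bool => (u (n + 1) i q - u n i q) / δt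
          + Lδ δα k ρ lamA lamB γa γb Nα p.1 p.2 (u n) i q
          + ftil σ φ Δ lamA lamB p.1 p.2 ((i : ℝ) * δα) q)).bddAbove).mono ?_
      rintro x ⟨la, lb, -, -, rfl⟩
      exact ⟨(la, lb), rfl⟩
    · refine ((Set.finite_range (fun p : Bool =>
          u n i (q + (if p then 1 else -1)) - u n i q - Υ)).bddAbove).mono ?_
      rintro x ⟨z, rfl | rfl, -, -, rfl⟩
      · exact ⟨true, by simp⟩
      · exact ⟨false, by simp⟩
  rintro x (⟨la, lb, hla, hlb, rfl⟩ | ⟨z, hz, hz1, hz2, rfl⟩)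
  · refine le_trans ?_ (le_csSup hbdd (Or.inl ⟨la, lb, hla, hlb, rfl⟩))
    have ht : (w (n + 1) i q - w n i q) / δt ≤ (u (n + 1) i q - u n i q) / δt := by
      have := huw (n + 1) hn i q hi hq
      rw [heq]
      gcongr
    have hL : Lδ δα k ρ lamA lamB γa γb Nα la lb (w n) i q
        ≤ Lδ δα k ρ lamA lamB γa γb Nα la lb (u n) i q := by
      simp only [Lδ, heq]
      have hp := hV ((i : ℝ) * δα + δα) q hq
      have hm := hV ((i : ℝ) * δα - δα) q hq
      refine add_le_add (add_le_add (add_le_add (sub_le_sub ?_ ?_) ?_) ?_) ?_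
      · gcongr
      · gcongr
      · split_ifs
        · gcongr
        · exact le_rfl
      · refine mul_le_mul_of_nonneg_left (sub_le_sub_right ?_ _) hlamA.le
        cases la
        · simpa using hV _ q hq
        · have := hla rfl
          simpa using hV _ (q - 1) (abs_le.mpr ⟨by omega, by omega⟩)
      · refine mul_le_mul_of_nonneg_left (sub_le_sub_right ?_ _) hlamB.le
        cases lb
        · simpa using hV _ q hq
        · have := hlb rfl
          simpa using hV _ (q + 1) (abs_le.mpr ⟨by omega, by omega⟩)
    linarith
  · refine le_trans ?_ (le_csSup hbdd (Or.inr ⟨z, hz, hz1, hz2, rfl⟩))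
    have : |q + z| ≤ Qb := by
      rcases hz with rfl | rfl
      · have := hz1 rfl
        exact abs_le.mpr ⟨by omega, by omega⟩
      · have := hz2 rfl
        exact abs_le.mpr ⟨by omega, by omega⟩
    have := huw n hn.le i (q + z) hi this
    linarith
end
end

section
/- Stability of the implicit scheme: every grid function v satisfying the implicit scheme obeys the uniform bounds U₁(t_n) ≤ v(t_n, αᵢ, q) ≤ U₂(t_n) at every grid point, where U₁(t) = −Υ·Q̄ − ψ·Q̄² − (T − t)·(σ·A·Q̄ + φ·Q̄²) and U₂(t) = (T − t)·(Δ·(λᵃ + λᵇ) + σ·A·Q̄). -/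
open Finset

noncomputable section

/-- The implicit scheme: `v(t_N, αᵢ, q) = g̃(T, αᵢ, q) = −Υ·|q| − ψ·q²` at the terminal time,
and for every `n < N` and every grid point `(αᵢ, q)` the maximum, over all admissible limit
controls `lᵃ, lᵇ ∈ {0,1}` and all admissible impulses `z ∈ {1, −1}`, of
`(v(t_{n+1},αᵢ,q) − v(t_n,αᵢ,q))/δt + L_δ^{lᵃ,lᵇ}v(t_n,αᵢ,q) + f̃^{lᵃ,lᵇ}(t_n,αᵢ,q)` and
`B_δ^z v(t_n,αᵢ,q) − Υ` equals zero (every candidate is `≤ 0` and some candidate is `= 0`). -/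
def SchemeSol (δt δα σ Δ Υ lamA lamB k ρ γa γb φ ψ : ℝ) (N Nα : ℕ) (Qb : ℤ)
    (v : ℕ → ℤ → ℤ → ℝ) : Prop :=
  (∀ i q : ℤ, |i| ≤ (Nα : ℤ) → |q| ≤ Qb →
    v N i q = -Υ * |(q : ℝ)| - ψ * (q : ℝ) ^ 2) ∧
  ∀ n : ℕ, n < N → ∀ i q : ℤ, |i| ≤ (Nα : ℤ) → |q| ≤ Qb →
    (∀ la lb : Bool, (la = true → -Qb < q) → (lb = true → q < Qb) →
      (v (n + 1) i q - v n i q) / δt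
        + Lδ δα k ρ lamA lamB γa γb Nα la lb (v n) i q
        + ftil σ φ Δ lamA lamB la lb ((i : ℝ) * δα) q ≤ 0) ∧
    (∀ z : ℤ, (z = 1 ∨ z = -1) → (z = 1 → q < Qb) → (z = -1 → -Qb < q) →
      v n i (q + z) - v n i q - Υ ≤ 0) ∧
    ((∃ la lb : Bool, (la = true → -Qb < q) ∧ (lb = true → q < Qb) ∧
        (v (n + 1) i q - v n i q) / δt
          + Lδ δα k ρ lamA lamB γa γb Nα la lb (v n) i q
          + ftil σ φ Δ lamA lamB la lb ((i : ℝ) * δα) q = 0) ∨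
      (∃ z : ℤ, (z = 1 ∨ z = -1) ∧ (z = 1 → q < Qb) ∧ (z = -1 → -Qb < q) ∧
        v n i (q + z) - v n i q - Υ = 0))


lemma interp_weights (δα : ℝ) (hδα : 0 < δα) (Nα : ℕ) (hN : 0 < Nα) (f : ℤ → ℝ) (α : ℝ) :
    ∃ (j : ℤ) (θ : ℝ), |j| ≤ (Nα : ℤ) ∧ |j + 1| ≤ (Nα : ℤ) ∧ 0 ≤ θ ∧ θ ≤ 1 ∧
      interp δα Nα f α = (1 - θ) * f j + θ * f (j + 1) := by
  have hNr : (0 : ℝ) < Nα := by exact_mod_cast hN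
  set β : ℝ := max (-((Nα : ℝ) * δα)) (min ((Nα : ℝ) * δα) α) with hβ
  have hp : 0 < (Nα : ℝ) * δα := by positivity
  have h1 : -(Nα : ℝ) ≤ β / δα := by
    rw [le_div_iff₀ hδα]
    have := le_max_left (-((Nα : ℝ) * δα)) (min ((Nα : ℝ) * δα) α)
    linarith
  have h2 : β / δα ≤ Nα := by
    rw [div_le_iff₀ hδα]
    exact max_le (by linarith) (min_le_left _ _)
  have h3 : -(Nα : ℤ) ≤ ⌊β / δα⌋ := by
    rw [Int.le_floor]; push_cast; exact h1
  have h4 := Int.floor_le (β / δα)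
  have h5 := Int.lt_floor_add_one (β / δα)
  refine ⟨min ⌊β / δα⌋ ((Nα : ℤ) - 1), β / δα - ((min ⌊β / δα⌋ ((Nα : ℤ) - 1) : ℤ) : ℝ),
    ?_, ?_, ?_, ?_, rfl⟩
  · rw [abs_le]; omega
  · rw [abs_le]; omega
  · have : ((min ⌊β / δα⌋ ((Nα : ℤ) - 1) : ℤ) : ℝ) ≤ (⌊β / δα⌋ : ℝ) := by
      exact_mod_cast min_le_left _ _
    linarith
  · rcases min_choice ⌊β / δα⌋ ((Nα : ℤ) - 1) with h | h <;> rw [h]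
    · linarith
    · push_cast; linarith

lemma interp_le (δα : ℝ) (hδα : 0 < δα) (Nα : ℕ) (hN : 0 < Nα) (f : ℤ → ℝ) (α M : ℝ)
    (h : ∀ j : ℤ, |j| ≤ (Nα : ℤ) → f j ≤ M) : interp δα Nα f α ≤ M := by
  obtain ⟨j, θ, h1, h2, h3, h4, h5⟩ := interp_weights δα hδα Nα hN f α
  rw [h5]
  nlinarith [mul_le_mul_of_nonneg_left (h j h1) (sub_nonneg.2 h4),
    mul_le_mul_of_nonneg_left (h _ h2) h3]

lemma le_interp (δα : ℝ) (hδα : 0 < δα) (Nα : ℕ) (hN : 0 < Nα) (f : ℤ → ℝ) (α M : ℝ)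
    (h : ∀ j : ℤ, |j| ≤ (Nα : ℤ) → M ≤ f j) : M ≤ interp δα Nα f α := by
  obtain ⟨j, θ, h1, h2, h3, h4, h5⟩ := interp_weights δα hδα Nα hN f α
  rw [h5]
  nlinarith [mul_le_mul_of_nonneg_left (h j h1) (sub_nonneg.2 h4),
    mul_le_mul_of_nonneg_left (h _ h2) h3]

lemma Lδ_nonpos (δα k ρ lamA lamB γa γb : ℝ) (Nα : ℕ) (hδα : 0 < δα) (hN : 0 < Nα)
    (hk : 0 < k) (hlamA : 0 < lamA) (hlamB : 0 < lamB) (la lb : Bool) (Qb : ℤ)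
    (v : ℤ → ℤ → ℝ) (i q : ℤ) (hq : |q| ≤ Qb)
    (ha : la = true → -Qb < q) (hb : lb = true → q < Qb)
    (h : ∀ j p : ℤ, |j| ≤ (Nα : ℤ) → |p| ≤ Qb → v j p ≤ v i q) :
    Lδ δα k ρ lamA lamB γa γb Nα la lb v i q ≤ 0 := by
  have key : ∀ (a : ℝ) (p : ℤ), |p| ≤ Qb → interp δα Nα (fun j => v j p) a ≤ v i q :=
    fun a p hp => interp_le δα hδα Nα hN _ a _ (fun j hj => h j p hj hp)
  have hq' := abs_le.1 hq
  unfold Lδ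
  have e1 := key ((i : ℝ) * δα + δα) q hq
  have e2 := key ((i : ℝ) * δα - δα) q hq
  have t1 : k * max (-((i : ℝ) * δα)) 0 *
      (interp δα Nα (fun j => v j q) ((i : ℝ) * δα + δα) - v i q) / δα ≤ 0 :=
    div_nonpos_of_nonpos_of_nonneg (mul_nonpos_of_nonneg_of_nonpos
      (mul_nonneg hk.le (le_max_right _ _)) (by linarith)) hδα.le
  have t2 : 0 ≤ k * max ((i : ℝ) * δα) 0 *
      (v i q - interp δα Nα (fun j => v j q) ((i : ℝ) * δα - δα)) / δα :=
    div_nonneg (mul_nonneg (mul_nonneg hk.le (le_max_right _ _)) (by linarith)) hδα.le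
  have t3 : (if |i| < (Nα : ℤ) then
        ρ ^ 2 / 2 * (interp δα Nα (fun j => v j q) ((i : ℝ) * δα + δα) - 2 * v i q
          + interp δα Nα (fun j => v j q) ((i : ℝ) * δα - δα)) / δα ^ 2
      else 0) ≤ 0 := by
    split_ifs
    · exact div_nonpos_of_nonpos_of_nonneg (mul_nonpos_of_nonneg_of_nonpos
        (by positivity) (by linarith)) (by positivity)
    · exact le_rfl
  have t4 : lamA * ((if la then interp δα Nα (fun j => v j (q - 1)) ((i : ℝ) * δα + γa)
      else interp δα Nα (fun j => v j q) ((i : ℝ) * δα + γa)) - v i q) ≤ 0 := by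
    refine mul_nonpos_of_nonneg_of_nonpos hlamA.le (sub_nonpos.2 ?_)
    split_ifs with hl
    · exact key _ _ (abs_le.2 (by have := ha hl; omega))
    · exact key _ _ hq
  have t5 : lamB * ((if lb then interp δα Nα (fun j => v j (q + 1)) ((i : ℝ) * δα - γb)
      else interp δα Nα (fun j => v j q) ((i : ℝ) * δα - γb)) - v i q) ≤ 0 := by
    refine mul_nonpos_of_nonneg_of_nonpos hlamB.le (sub_nonpos.2 ?_)
    split_ifs with hl
    · exact key _ _ (abs_le.2 (by have := hb hl; omega))
    · exact key _ _ hq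
  dsimp only
  linarith

lemma Lδ_nonneg (δα k ρ lamA lamB γa γb : ℝ) (Nα : ℕ) (hδα : 0 < δα) (hN : 0 < Nα)
    (hk : 0 < k) (hlamA : 0 < lamA) (hlamB : 0 < lamB) (Qb : ℤ)
    (v : ℤ → ℤ → ℝ) (i q : ℤ) (hq : |q| ≤ Qb)
    (h : ∀ j p : ℤ, |j| ≤ (Nα : ℤ) → |p| ≤ Qb → v i q ≤ v j p) :
    0 ≤ Lδ δα k ρ lamA lamB γa γb Nα false false v i q := by
  have key : ∀ (a : ℝ), v i q ≤ interp δα Nα (fun j => v j q) a :=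
    fun a => le_interp δα hδα Nα hN _ a _ (fun j hj => h j q hj hq)
  unfold Lδ
  have e1 := key ((i : ℝ) * δα + δα)
  have e2 := key ((i : ℝ) * δα - δα)
  have t1 : 0 ≤ k * max (-((i : ℝ) * δα)) 0 *
      (interp δα Nα (fun j => v j q) ((i : ℝ) * δα + δα) - v i q) / δα :=
    div_nonneg (mul_nonneg (mul_nonneg hk.le (le_max_right _ _)) (by linarith)) hδα.le
  have t2 : k * max ((i : ℝ) * δα) 0 *
      (v i q - interp δα Nα (fun j => v j q) ((i : ℝ) * δα - δα)) / δα ≤ 0 :=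
    div_nonpos_of_nonpos_of_nonneg (mul_nonpos_of_nonneg_of_nonpos
      (mul_nonneg hk.le (le_max_right _ _)) (by linarith)) hδα.le
  have t3 : 0 ≤ (if |i| < (Nα : ℤ) then
        ρ ^ 2 / 2 * (interp δα Nα (fun j => v j q) ((i : ℝ) * δα + δα) - 2 * v i q
          + interp δα Nα (fun j => v j q) ((i : ℝ) * δα - δα)) / δα ^ 2
      else 0) := by
    split_ifs
    · exact div_nonneg (mul_nonneg (by positivity) (by linarith)) (by positivity)
    · exact le_rfl
  have t4 : 0 ≤ lamA * (interp δα Nα (fun j => v j q) ((i : ℝ) * δα + γa) - v i q) :=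
    mul_nonneg hlamA.le (sub_nonneg.2 (key _))
  have t5 : 0 ≤ lamB * (interp δα Nα (fun j => v j q) ((i : ℝ) * δα - γb) - v i q) :=
    mul_nonneg hlamB.le (sub_nonneg.2 (key _))
  simp only [Bool.false_eq_true, if_false]
  linarith

/-- Stability of the implicit scheme: every grid function `v` satisfying the implicit scheme
obeys the uniform bounds `U₁(t_n) ≤ v(t_n, αᵢ, q) ≤ U₂(t_n)` at every grid point, where
`U₁(t) = −Υ·Q̄ − ψ·Q̄² − (T − t)(σ·A·Q̄ + φ·Q̄²)` and
`U₂(t) = (T − t)(Δ·(λᵃ + λᵇ) + σ·A·Q̄)`. -/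
theorem scheme_stability
    (T A δt δα σ Δ ε Υ lamA lamB k ρ γa γb φ ψ : ℝ) (N Nα : ℕ) (Qb : ℤ)
    (hT : 0 < T) (hA : 0 < A) (hQ : 1 ≤ Qb) (hσ : 0 < σ) (hΔ : 0 ≤ Δ) (hε : 0 < ε)
    (hΥ : Υ = Δ + ε) (hlamA : 0 < lamA) (hlamB : 0 < lamB) (hk : 0 < k) (hρ : 0 < ρ)
    (hγa : 0 < γa) (hγb : 0 < γb) (hφ : 0 < φ) (hψ : 0 < ψ)
    (hN : 0 < N) (hδt : δt = T / N) (hδα : 0 < δα) (hNα : (Nα : ℝ) * δα = A)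
    (v : ℕ → ℤ → ℤ → ℝ)
    (hv : SchemeSol δt δα σ Δ Υ lamA lamB k ρ γa γb φ ψ N Nα Qb v) :
    ∀ n : ℕ, n ≤ N → ∀ i q : ℤ, |i| ≤ (Nα : ℤ) → |q| ≤ Qb →
      (-Υ * (Qb : ℝ) - ψ * (Qb : ℝ) ^ 2
          - (T - (n : ℝ) * δt) * (σ * A * (Qb : ℝ) + φ * (Qb : ℝ) ^ 2) ≤ v n i q) ∧
      v n i q ≤ (T - (n : ℝ) * δt) * (Δ * (lamA + lamB) + σ * A * (Qb : ℝ)) := by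
  have hNα0 : 0 < Nα := by
    rcases Nat.eq_zero_or_pos Nα with h | h
    · subst h; simp at hNα; linarith
    · exact h
  have hNr : (0 : ℝ) < N := by exact_mod_cast hN
  have hδt0 : 0 < δt := by rw [hδt]; positivity
  have hNT : (N : ℝ) * δt = T := by rw [hδt]; field_simp
  have hΥ0 : 0 < Υ := by linarith
  have hQr : (1 : ℝ) ≤ Qb := by exact_mod_cast hQ
  have habsq : ∀ q : ℤ, |q| ≤ Qb → |(q : ℝ)| ≤ Qb := fun q hq => by exact_mod_cast hq
  have hsq : ∀ q : ℤ, |q| ≤ Qb → (q : ℝ) ^ 2 ≤ (Qb : ℝ) ^ 2 := fun q hq => by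
    rw [← sq_abs]
    exact pow_le_pow_left₀ (abs_nonneg _) (habsq q hq) 2
  have hlin : ∀ i q : ℤ, |i| ≤ (Nα : ℤ) → |q| ≤ Qb →
      |(i : ℝ) * δα * σ * (q : ℝ)| ≤ σ * A * Qb := by
    intro i q hi hq
    have hi' : |(i : ℝ)| ≤ Nα := by exact_mod_cast hi
    rw [abs_mul, abs_mul, abs_mul, abs_of_pos hδα, abs_of_pos hσ]
    calc |(i : ℝ)| * δα * σ * |(q : ℝ)| ≤ Nα * δα * σ * Qb := by
          have := habsq q hq
          gcongr
      _ = σ * A * Qb := by rw [hNα]; ring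
  obtain ⟨hterm, hstep⟩ := hv
  let S : Finset (ℤ × ℤ) := Finset.Icc (-(Nα : ℤ)) Nα ×ˢ Finset.Icc (-Qb) Qb
  have hS : ∀ i q : ℤ, (i, q) ∈ S ↔ |i| ≤ (Nα : ℤ) ∧ |q| ≤ Qb := by
    intro i q
    simp only [S, Finset.mem_product, Finset.mem_Icc, abs_le]
  have hSne : S.Nonempty := ⟨(0, 0), (hS 0 0).2 ⟨by simp, by simp; omega⟩⟩
  intro n hn
  induction hn using Nat.decreasingInduction with
  | self =>
    intro i q hi hq
    rw [hterm i q hi hq, hNT]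
    have h1 := mul_le_mul_of_nonneg_left (habsq q hq) hΥ0.le
    have h2 := mul_le_mul_of_nonneg_left (hsq q hq) hψ.le
    have h3 := mul_nonneg hΥ0.le (abs_nonneg (q : ℝ))
    have h4 := mul_nonneg hψ.le (sq_nonneg (q : ℝ))
    constructor <;> linarith
  | of_succ n hn ih =>
    intro i q hi hq
    have hcast : ((n + 1 : ℕ) : ℝ) = (n : ℝ) + 1 := by push_cast; ring
    rw [hcast] at ih
    constructor
    · obtain ⟨⟨i₀, q₀⟩, hmem, hmin⟩ := S.exists_min_image (fun x => v n x.1 x.2) hSne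
      obtain ⟨hi₀, hq₀⟩ := (hS _ _).1 hmem
      have hmin' : ∀ j p : ℤ, |j| ≤ (Nα : ℤ) → |p| ≤ Qb → v n i₀ q₀ ≤ v n j p :=
        fun j p hj hp => hmin (j, p) ((hS j p).2 ⟨hj, hp⟩)
      refine le_trans ?_ (hmin' i q hi hq)
      have hs := (hstep n hn i₀ q₀ hi₀ hq₀).1 false false (by simp) (by simp)
      have hL := Lδ_nonneg δα k ρ lamA lamB γa γb Nα hδα hNα0 hk hlamA hlamB Qb (v n) i₀ q₀
        hq₀ hmin'
      have hf : -(σ * A * Qb + φ * (Qb : ℝ) ^ 2)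
          ≤ ftil σ φ Δ lamA lamB false false ((i₀ : ℝ) * δα) q₀ := by
        simp only [ftil, Bool.false_eq_true, if_false]
        have h1 := (abs_le.1 (hlin i₀ q₀ hi₀ hq₀)).1
        have h2 := mul_le_mul_of_nonneg_left (hsq q₀ hq₀) hφ.le
        linarith
      have hd : (v (n + 1) i₀ q₀ - v n i₀ q₀) / δt ≤ σ * A * Qb + φ * (Qb : ℝ) ^ 2 := by
        linarith
      rw [div_le_iff₀ hδt0] at hd
      have := (ih i₀ q₀ hi₀ hq₀).1
      linarith
    · obtain ⟨⟨i₀, q₀⟩, hmem, hmax⟩ := S.exists_max_image (fun x => v n x.1 x.2) hSne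
      obtain ⟨hi₀, hq₀⟩ := (hS _ _).1 hmem
      have hmax' : ∀ j p : ℤ, |j| ≤ (Nα : ℤ) → |p| ≤ Qb → v n j p ≤ v n i₀ q₀ :=
        fun j p hj hp => hmax (j, p) ((hS j p).2 ⟨hj, hp⟩)
      refine le_trans (hmax' i q hi hq) ?_
      have hq₁ := abs_le.1 hq₀
      rcases (hstep n hn i₀ q₀ hi₀ hq₀).2.2 with ⟨la, lb, ha, hb, hs⟩ | ⟨z, hz, hz1, hz2, hs⟩
      · have hL := Lδ_nonpos δα k ρ lamA lamB γa γb Nα hδα hNα0 hk hlamA hlamB la lb Qb (v n)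
          i₀ q₀ hq₀ ha hb hmax'
        have hf : ftil σ φ Δ lamA lamB la lb ((i₀ : ℝ) * δα) q₀
            ≤ Δ * (lamA + lamB) + σ * A * Qb := by
          have h1 := (abs_le.1 (hlin i₀ q₀ hi₀ hq₀)).2
          have h2 := mul_nonneg hφ.le (sq_nonneg (q₀ : ℝ))
          have h3 := mul_nonneg hlamA.le hΔ
          have h4 := mul_nonneg hlamB.le hΔ
          unfold ftil
          split_ifs <;> linarith
        have hd : -(Δ * (lamA + lamB) + σ * A * Qb) ≤ (v (n + 1) i₀ q₀ - v n i₀ q₀) / δt := by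
          linarith
        rw [le_div_iff₀ hδt0] at hd
        have := (ih i₀ q₀ hi₀ hq₀).2
        linarith
      · exfalso
        have hqz : |q₀ + z| ≤ Qb := by
          rw [abs_le]
          rcases hz with h | h
          · have := hz1 h; omega
          · have := hz2 h; omega
        have := hmax' i₀ (q₀ + z) hi₀ hqz
        linarith
end
end

section
/- Existence and uniqueness for the implicit scheme: for every choice of grid parameters δt = T/N > 0 and δα = A/N_α > 0, there exists exactly one grid function v satisfying the implicit scheme (i.e., satisfying the terminal condition v(t_N, αᵢ, q) = g̃(T, αᵢ, q) and the discrete equation at every n < N and every grid point (αᵢ, q)). -/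
open Finset

noncomputable section

theorem perron_aux {X κ : Type*} [Fintype κ] (S : Finset X) (adm : X → κ → Prop)
    (F : κ → X → (X → ℝ) → ℝ) (hne : ∀ x, ∃ c, adm x c)
    (hmono : ∀ c, ∀ x ∈ S, adm x c → ∀ u w : X → ℝ, (∀ y ∈ S, u y ≤ w y) → F c x u ≤ F c x w)
    (C : ℝ) (hup : ∀ c, ∀ x ∈ S, adm x c → F c x (fun _ => C) ≤ C)
    (hC : -C ≤ C)
    (hlo : ∀ x ∈ S, ∃ c, adm x c ∧ -C ≤ F c x (fun _ => -C)) :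
    ∃ v : X → ℝ, ∀ x ∈ S, (∀ c, adm x c → F c x v ≤ v x) ∧ ∃ c, adm x c ∧ F c x v = v x := by
  classical
  let Kf : X → Finset κ := fun x => univ.filter (adm x)
  have hK : ∀ x, (Kf x).Nonempty := fun x => by
    obtain ⟨c, hc⟩ := hne x
    exact ⟨c, by simp [Kf, hc]⟩
  let Tm : (X → ℝ) → X → ℝ := fun u x => (Kf x).sup' (hK x) (fun c => F c x u)
  have hT1 : ∀ u x c, adm x c → F c x u ≤ Tm u x := fun u x c hc =>
    Finset.le_sup' (fun c => F c x u) (by simp [Kf, hc])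
  have hT2 : ∀ u x, ∃ c, adm x c ∧ Tm u x = F c x u := fun u x => by
    obtain ⟨c, hc, h⟩ := Finset.exists_mem_eq_sup' (hK x) (fun c => F c x u)
    exact ⟨c, by simpa [Kf] using hc, h⟩
  have hTm : ∀ u w : X → ℝ, (∀ y ∈ S, u y ≤ w y) → ∀ x ∈ S, Tm u x ≤ Tm w x := by
    intro u w h x hx
    obtain ⟨c, hc, e⟩ := hT2 u x
    rw [e]
    exact (hmono c x hx hc u w h).trans (hT1 w x c hc)
  let 𝒮 : Set (X → ℝ) := {u | (∀ x ∈ S, u x ≤ C) ∧ ∀ x ∈ S, u x ≤ Tm u x}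
  let v : X → ℝ := fun x => sSup ((fun u : X → ℝ => u x) '' 𝒮)
  have hbase : (fun _ => -C) ∈ 𝒮 := by
    refine ⟨fun _ _ => hC, fun x hx => ?_⟩
    obtain ⟨c, hc, h⟩ := hlo x hx
    exact h.trans (hT1 _ x c hc)
  have hle : ∀ u ∈ 𝒮, ∀ x ∈ S, u x ≤ v x := by
    intro u hu x hx
    refine le_csSup ⟨C, ?_⟩ ⟨u, hu, rfl⟩
    rintro _ ⟨u', hu', rfl⟩
    exact hu'.1 x hx
  have hvC : ∀ x ∈ S, v x ≤ C := by
    intro x hx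
    refine csSup_le ⟨_, _, hbase, rfl⟩ ?_
    rintro _ ⟨u', hu', rfl⟩
    exact hu'.1 x hx
  have hv1 : ∀ x ∈ S, v x ≤ Tm v x := by
    intro x hx
    refine csSup_le ⟨_, _, hbase, rfl⟩ ?_
    rintro _ ⟨u', hu', rfl⟩
    exact (hu'.2 x hx).trans (hTm u' v (hle u' hu') x hx)
  have hTv : Tm v ∈ 𝒮 := by
    refine ⟨fun x hx => ?_, fun x hx => hTm v _ hv1 x hx⟩
    obtain ⟨c, hc, e⟩ := hT2 v x
    rw [e]
    exact (hmono c x hx hc v _ hvC).trans (hup c x hx hc)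
  have hv2 : ∀ x ∈ S, Tm v x ≤ v x := hle _ hTv
  refine ⟨v, fun x hx => ⟨fun c hc => (hT1 v x c hc).trans (hv2 x hx), ?_⟩⟩
  obtain ⟨c, hc, e⟩ := hT2 v x
  exact ⟨c, hc, e ▸ le_antisymm (hv2 x hx) (hv1 x hx)⟩

theorem interp_mono_aux (δα : ℝ) (Nα : ℕ) (hδα : 0 < δα) (hN : 0 < Nα) (f g : ℤ → ℝ) (m a : ℝ)
    (h : ∀ j : ℤ, |j| ≤ (Nα : ℤ) → f j ≤ g j + m) :
    interp δα Nα f a ≤ interp δα Nα g a + m := by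
  unfold interp
  dsimp only
  set β : ℝ := max (-((Nα : ℝ) * δα)) (min ((Nα : ℝ) * δα) a) with hβ
  have hA : 0 < (Nα : ℝ) * δα := by positivity
  have hb1 : -((Nα : ℝ) * δα) ≤ β := le_max_left _ _
  have hb2 : β ≤ (Nα : ℝ) * δα := max_le (by linarith) (min_le_left _ _)
  have hx1 : -(Nα : ℝ) ≤ β / δα := by rw [le_div_iff₀ hδα]; linarith
  have hx2 : β / δα ≤ (Nα : ℝ) := by rw [div_le_iff₀ hδα]; linarith
  set x := β / δα
  set i0 : ℤ := min ⌊x⌋ ((Nα : ℤ) - 1) with hi0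
  have hfl : -(Nα : ℤ) ≤ ⌊x⌋ := by rw [Int.le_floor]; push_cast; exact hx1
  have hN' : (1 : ℤ) ≤ (Nα : ℤ) := by exact_mod_cast hN
  have h1 : -(Nα : ℤ) ≤ i0 := le_min hfl (by omega)
  have h2 : i0 ≤ (Nα : ℤ) - 1 := min_le_right _ _
  have ht0 : (i0 : ℝ) ≤ x := by
    have : i0 ≤ ⌊x⌋ := min_le_left _ _
    exact Int.le_floor.mp this
  have ht1 : x ≤ (i0 : ℝ) + 1 := by
    rcases min_choice ⌊x⌋ ((Nα : ℤ) - 1) with e | e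
    · rw [hi0, e]; exact (Int.lt_floor_add_one x).le
    · rw [hi0, e]; push_cast; linarith
  have f1 := h i0 (abs_le.mpr ⟨h1, by omega⟩)
  have f2 := h (i0 + 1) (abs_le.mpr ⟨by omega, by omega⟩)
  have e1 := mul_le_mul_of_nonneg_left f1 (by linarith : (0:ℝ) ≤ 1 - (x - i0))
  have e2 := mul_le_mul_of_nonneg_left f2 (by linarith : (0:ℝ) ≤ x - i0)
  linarith

theorem interp_const_aux (δα : ℝ) (Nα : ℕ) (c a : ℝ) :
    interp δα Nα (fun _ => c) a = c := by
  unfold interp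
  dsimp only
  ring

theorem L_const_aux (δα k ρ lamA lamB γa γb : ℝ) (Nα : ℕ) (la lb : Bool) (c : ℝ) (i q : ℤ) :
    Lδ δα k ρ lamA lamB γa γb Nα la lb (fun _ _ => c) i q = 0 := by
  unfold Lδ
  simp only [interp_const_aux, ite_self]
  split_ifs <;> ring

/-- total rate bound -/
def Rtot (δα k ρ lamA lamB : ℝ) (Nα : ℕ) : ℝ :=
  k * Nα + ρ ^ 2 / δα ^ 2 + lamA + lamB

theorem L_mono_aux (δα k ρ lamA lamB γa γb : ℝ) (Nα : ℕ) (Qb : ℤ) (hδα : 0 < δα) (hN : 0 < Nα)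
    (hk : 0 < k) (hlamA : 0 < lamA) (hlamB : 0 < lamB)
    (la lb : Bool) (u w : ℤ → ℤ → ℝ) (m : ℝ)
    (h : ∀ i q : ℤ, |i| ≤ (Nα : ℤ) → |q| ≤ Qb → u i q ≤ w i q + m) (i q : ℤ)
    (hi : |i| ≤ (Nα : ℤ)) (hq : |q| ≤ Qb)
    (ha : la = true → -Qb < q) (hb : lb = true → q < Qb) :
    Rtot δα k ρ lamA lamB Nα * u i q + Lδ δα k ρ lamA lamB γa γb Nα la lb u i q ≤
    Rtot δα k ρ lamA lamB Nα * w i q + Lδ δα k ρ lamA lamB γa γb Nα la lb w i q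
      + Rtot δα k ρ lamA lamB Nα * m := by
  have hI : ∀ a (q' : ℤ), |q'| ≤ Qb →
      interp δα Nα (fun j => u j q') a ≤ interp δα Nα (fun j => w j q') a + m :=
    fun a q' hq' => interp_mono_aux δα Nα hδα hN _ _ m a (fun j hj => h j q' hj hq')
  have hq2 := abs_le.mp hq
  have hX : (if la then interp δα Nα (fun j => u j (q - 1)) ((i : ℝ) * δα + γa)
        else interp δα Nα (fun j => u j q) ((i : ℝ) * δα + γa)) ≤
      (if la then interp δα Nα (fun j => w j (q - 1)) ((i : ℝ) * δα + γa)
        else interp δα Nα (fun j => w j q) ((i : ℝ) * δα + γa)) + m := by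
    split_ifs with hla
    · have := ha hla
      exact hI _ _ (abs_le.mpr ⟨by omega, by omega⟩)
    · exact hI _ _ hq
  have hY : (if lb then interp δα Nα (fun j => u j (q + 1)) ((i : ℝ) * δα - γb)
        else interp δα Nα (fun j => u j q) ((i : ℝ) * δα - γb)) ≤
      (if lb then interp δα Nα (fun j => w j (q + 1)) ((i : ℝ) * δα - γb)
        else interp δα Nα (fun j => w j q) ((i : ℝ) * δα - γb)) + m := by
    split_ifs with hlb
    · have := hb hlb
      exact hI _ _ (abs_le.mpr ⟨by omega, by omega⟩)
    · exact hI _ _ hq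
  have hP := hI ((i : ℝ) * δα + δα) q hq
  have hM := hI ((i : ℝ) * δα - δα) q hq
  have h0 := h i q hi hq
  have hiR : |(i : ℝ)| ≤ (Nα : ℝ) := by exact_mod_cast hi
  have key : ∀ (z : ℤ → ℤ → ℝ), Lδ δα k ρ lamA lamB γa γb Nα la lb z i q =
      (k * max (-(i : ℝ)) 0) * (interp δα Nα (fun j => z j q) ((i : ℝ) * δα + δα) - z i q)
      + (k * max (i : ℝ) 0) * (interp δα Nα (fun j => z j q) ((i : ℝ) * δα - δα) - z i q)
      + (if |i| < (Nα : ℤ) then ρ ^ 2 / δα ^ 2 / 2 else 0) *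
        (interp δα Nα (fun j => z j q) ((i : ℝ) * δα + δα) - 2 * z i q
          + interp δα Nα (fun j => z j q) ((i : ℝ) * δα - δα))
      + lamA * ((if la then interp δα Nα (fun j => z j (q - 1)) ((i : ℝ) * δα + γa)
        else interp δα Nα (fun j => z j q) ((i : ℝ) * δα + γa)) - z i q)
      + lamB * ((if lb then interp δα Nα (fun j => z j (q + 1)) ((i : ℝ) * δα - γb)
        else interp δα Nα (fun j => z j q) ((i : ℝ) * δα - γb)) - z i q) := by
    intro z
    have m1 : max (-((i : ℝ) * δα)) 0 = max (-(i : ℝ)) 0 * δα := by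
      rw [max_mul_of_nonneg _ _ hδα.le]; simp
    have m2 : max ((i : ℝ) * δα) 0 = max (i : ℝ) 0 * δα := by
      rw [max_mul_of_nonneg _ _ hδα.le]; simp
    unfold Lδ
    dsimp only
    rw [m1, m2]
    congr 2
    congr 1
    · field_simp
      ring
    · split_ifs
      · field_simp
      · ring
  rw [key u, key w]
  have a1 : 0 ≤ k * max (-(i : ℝ)) 0 := mul_nonneg hk.le (le_max_right _ _)
  have a2 : 0 ≤ k * max (i : ℝ) 0 := mul_nonneg hk.le (le_max_right _ _)
  have a12 : k * max (-(i : ℝ)) 0 + k * max (i : ℝ) 0 ≤ k * Nα := by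
    rw [← mul_add]
    refine mul_le_mul_of_nonneg_left ?_ hk.le
    obtain ⟨j1, j2⟩ := abs_le.mp hiR
    rcases le_total 0 (i : ℝ) with e | e
    · rw [max_eq_right (by linarith), max_eq_left e]; linarith
    · rw [max_eq_left (by linarith), max_eq_right e]; linarith
  have hr : 0 ≤ ρ ^ 2 / δα ^ 2 := by positivity
  have a3 : 0 ≤ (if |i| < (Nα : ℤ) then ρ ^ 2 / δα ^ 2 / 2 else 0) := by
    split_ifs <;> positivity
  have a3' : (if |i| < (Nα : ℤ) then ρ ^ 2 / δα ^ 2 / 2 else 0) ≤ ρ ^ 2 / δα ^ 2 / 2 := by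
    split_ifs
    · exact le_rfl
    · positivity
  unfold Rtot
  generalize k * max (-(i : ℝ)) 0 = c1 at *
  generalize k * max (i : ℝ) 0 = c2 at *
  generalize (if |i| < (Nα : ℤ) then ρ ^ 2 / δα ^ 2 / 2 else 0) = c3 at *
  generalize ρ ^ 2 / δα ^ 2 = r at *
  have p1 := mul_le_mul_of_nonneg_left hP (add_nonneg a1 a3)
  have p2 := mul_le_mul_of_nonneg_left hM (add_nonneg a2 a3)
  have p3 := mul_le_mul_of_nonneg_left hX hlamA.le
  have p4 := mul_le_mul_of_nonneg_left hY hlamB.le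
  have p5 := mul_le_mul_of_nonneg_left h0
    (by linarith : (0:ℝ) ≤ k * Nα + r - c1 - c2 - 2 * c3)
  linarith

/-- One time step of the scheme. -/
def StepSol (δt δα σ Δ Υ lamA lamB k ρ γa γb φ : ℝ) (Nα : ℕ) (Qb : ℤ)
    (w v : ℤ → ℤ → ℝ) : Prop :=
  ∀ i q : ℤ, |i| ≤ (Nα : ℤ) → |q| ≤ Qb →
    (∀ la lb : Bool, (la = true → -Qb < q) → (lb = true → q < Qb) →
      (w i q - v i q) / δt
        + Lδ δα k ρ lamA lamB γa γb Nα la lb v i q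
        + ftil σ φ Δ lamA lamB la lb ((i : ℝ) * δα) q ≤ 0) ∧
    (∀ z : ℤ, (z = 1 ∨ z = -1) → (z = 1 → q < Qb) → (z = -1 → -Qb < q) →
      v i (q + z) - v i q - Υ ≤ 0) ∧
    ((∃ la lb : Bool, (la = true → -Qb < q) ∧ (lb = true → q < Qb) ∧
        (w i q - v i q) / δt
          + Lδ δα k ρ lamA lamB γa γb Nα la lb v i q
          + ftil σ φ Δ lamA lamB la lb ((i : ℝ) * δα) q = 0) ∨
      (∃ z : ℤ, (z = 1 ∨ z = -1) ∧ (z = 1 → q < Qb) ∧ (z = -1 → -Qb < q) ∧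
        v i (q + z) - v i q - Υ = 0))

theorem step_le_aux (δt δα σ Δ Υ lamA lamB k ρ γa γb φ : ℝ) (Nα : ℕ) (Qb : ℤ)
    (hδt : 0 < δt) (hδα : 0 < δα) (hN : 0 < Nα) (hQ : 1 ≤ Qb) (hΥ : 0 < Υ)
    (hk : 0 < k) (hlamA : 0 < lamA) (hlamB : 0 < lamB) (w w' u v : ℤ → ℤ → ℝ)
    (hw : ∀ i q : ℤ, |i| ≤ (Nα : ℤ) → |q| ≤ Qb → w i q = w' i q)
    (hu : StepSol δt δα σ Δ Υ lamA lamB k ρ γa γb φ Nα Qb w u)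
    (hv : StepSol δt δα σ Δ Υ lamA lamB k ρ γa γb φ Nα Qb w' v) :
    ∀ i q : ℤ, |i| ≤ (Nα : ℤ) → |q| ≤ Qb → u i q ≤ v i q := by
  classical
  let S : Finset (ℤ × ℤ) := Finset.Icc (-(Nα : ℤ)) Nα ×ˢ Finset.Icc (-Qb) Qb
  have hS : ∀ x : ℤ × ℤ, x ∈ S ↔ |x.1| ≤ (Nα : ℤ) ∧ |x.2| ≤ Qb := by
    intro x; simp [S, abs_le]
  have hSne : S.Nonempty := ⟨(0, 0), (hS _).mpr ⟨by simp, by simp; omega⟩⟩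
  obtain ⟨p0, hp0, hmax⟩ := Finset.exists_max_image S (fun x => u x.1 x.2 - v x.1 x.2) hSne
  set m := u p0.1 p0.2 - v p0.1 p0.2 with hm
  by_cases hm0 : m ≤ 0
  · intro i q hi hq
    have := hmax (i, q) ((hS _).mpr ⟨hi, hq⟩)
    simp only at this
    linarith
  exfalso
  push Not at hm0
  obtain ⟨p, hp, hpmax⟩ := Finset.exists_max_image
    (S.filter (fun x => u x.1 x.2 - v x.1 x.2 = m)) (fun x => u x.1 x.2)
    ⟨p0, by simp [hp0, hm]⟩
  obtain ⟨hpS, hpm⟩ := Finset.mem_filter.mp hp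
  obtain ⟨i, q⟩ := p
  obtain ⟨hi, hq⟩ := (hS _).mp hpS
  simp only at hi hq hpm hpmax
  have hle : ∀ i q : ℤ, |i| ≤ (Nα : ℤ) → |q| ≤ Qb → u i q ≤ v i q + m := by
    intro i q hi hq
    have := hmax (i, q) ((hS _).mpr ⟨hi, hq⟩)
    simp only at this
    linarith
  rcases (hu i q hi hq).2.2 with ⟨la, lb, ha, hb, e⟩ | ⟨z, hz, hz1, hz2, e⟩
  · have e2 := (hv i q hi hq).1 la lb ha hb
    have hL := L_mono_aux δα k ρ lamA lamB γa γb Nα Qb hδα hN hk hlamA hlamB la lb u v m hle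
      i q hi hq ha hb
    rw [hw i q hi hq] at e
    have hd : (w' i q - u i q) / δt - (w' i q - v i q) / δt = - (m / δt) := by
      rw [← hpm]; ring
    have : 0 < m / δt := by positivity
    have hum : Rtot δα k ρ lamA lamB Nα * u i q =
      Rtot δα k ρ lamA lamB Nα * v i q + Rtot δα k ρ lamA lamB Nα * m := by
      rw [← hpm]; ring
    linarith
  · have e2 := (hv i q hi hq).2.1 z hz hz1 hz2
    have hq' : |q + z| ≤ Qb := by
      have := abs_le.mp hq
      rcases hz with rfl | rfl
      · have := hz1 rfl
        exact abs_le.mpr ⟨by omega, by omega⟩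
      · have := hz2 rfl
        exact abs_le.mpr ⟨by omega, by omega⟩
    have h1 := hle i (q + z) hi hq'
    have h2 := hpmax (i, q + z) (Finset.mem_filter.mpr ⟨(hS _).mpr ⟨hi, hq'⟩, by
      simp only; linarith⟩)
    simp only at h2
    linarith

theorem step_exists_aux (δt δα σ Δ Υ lamA lamB k ρ γa γb φ : ℝ) (Nα : ℕ) (Qb : ℤ)
    (hδt : 0 < δt) (hδα : 0 < δα) (hN : 0 < Nα) (hΥ : 0 < Υ)
    (hk : 0 < k) (hlamA : 0 < lamA) (hlamB : 0 < lamB) (w : ℤ → ℤ → ℝ) :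
    ∃ v, StepSol δt δα σ Δ Υ lamA lamB k ρ γa γb φ Nα Qb w v := by
  classical
  let S : Finset (ℤ × ℤ) := Finset.Icc (-(Nα : ℤ)) Nα ×ˢ Finset.Icc (-Qb) Qb
  have hS : ∀ x : ℤ × ℤ, x ∈ S ↔ |x.1| ≤ (Nα : ℤ) ∧ |x.2| ≤ Qb := by
    intro x; simp [S, abs_le]
  set R := Rtot δα k ρ lamA lamB Nα with hR
  have hR0 : 0 ≤ R := by rw [hR]; unfold Rtot; positivity
  set K := R + 1 / δt with hK
  have hK0 : 0 < K := by positivity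
  let G : Bool → Bool → ℤ × ℤ → (ℤ × ℤ → ℝ) → ℝ := fun la lb x u =>
    (w x.1 x.2 - u x) / δt + Lδ δα k ρ lamA lamB γa γb Nα la lb (fun i q => u (i, q)) x.1 x.2
      + ftil σ φ Δ lamA lamB la lb ((x.1 : ℝ) * δα) x.2
  let zz : Bool → ℤ := fun b => if b then 1 else -1
  let adm : ℤ × ℤ → (Bool × Bool) ⊕ Bool → Prop := fun x c => match c with
    | Sum.inl l => (l.1 = true → -Qb < x.2) ∧ (l.2 = true → x.2 < Qb)
    | Sum.inr b => (b = true → x.2 < Qb) ∧ (b = false → -Qb < x.2)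
  let F : (Bool × Bool) ⊕ Bool → ℤ × ℤ → (ℤ × ℤ → ℝ) → ℝ := fun c x u => match c with
    | Sum.inl l => u x + G l.1 l.2 x u / K
    | Sum.inr b => u (x.1, x.2 + zz b) - Υ
  obtain ⟨C, hC⟩ : ∃ C : ℝ, ∀ y ∈ S ×ˢ (univ : Finset (Bool × Bool)),
      |w y.1.1 y.1.2 + δt * ftil σ φ Δ lamA lamB y.2.1 y.2.2 ((y.1.1 : ℝ) * δα) y.1.2| ≤ C := by
    obtain ⟨C, hC⟩ := Finset.exists_le ((S ×ˢ (univ : Finset (Bool × Bool))).image (fun y =>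
      |w y.1.1 y.1.2 + δt * ftil σ φ Δ lamA lamB y.2.1 y.2.2 ((y.1.1 : ℝ) * δα) y.1.2|))
    exact ⟨C, fun y hy => hC _ (Finset.mem_image_of_mem _ hy)⟩
  have hC' : ∀ x ∈ S, ∀ la lb : Bool,
      |w x.1 x.2 + δt * ftil σ φ Δ lamA lamB la lb ((x.1 : ℝ) * δα) x.2| ≤ max C 0 :=
    fun x hx la lb => (hC (x, (la, lb)) (by simp [hx])).trans (le_max_left _ _)
  have hC0 : 0 ≤ max C 0 := le_max_right _ _
  generalize max C 0 = D at hC' hC0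
  have hGc : ∀ la lb x c, G la lb x (fun _ => c) =
      ((w x.1 x.2 + δt * ftil σ φ Δ lamA lamB la lb ((x.1 : ℝ) * δα) x.2) - c) / δt := by
    intro la lb x c
    simp only [G, L_const_aux]
    field_simp
    ring
  obtain ⟨v, hv⟩ := perron_aux S adm F (fun x => ⟨Sum.inl (false, false), by simp [adm]⟩)
    (by
      rintro (⟨la, lb⟩ | b) ⟨i, q⟩ hx hc u u' huu
      · obtain ⟨hi, hq⟩ := (hS _).mp hx
        have hL := L_mono_aux δα k ρ lamA lamB γa γb Nα Qb hδα hN hk hlamA hlamB la lb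
          (fun i q => u (i, q)) (fun i q => u' (i, q)) 0
          (fun i q hi hq => by simpa using huu (i, q) ((hS _).mpr ⟨hi, hq⟩)) i q hi hq hc.1 hc.2
        have : K * u (i, q) + G la lb (i, q) u ≤ K * u' (i, q) + G la lb (i, q) u' := by
          simp only [G, hK]
          have e1 : (w i q - u (i, q)) / δt = w i q / δt - 1 / δt * u (i, q) := by ring
          have e2 : (w i q - u' (i, q)) / δt = w i q / δt - 1 / δt * u' (i, q) := by ring
          rw [e1, e2]
          simp only [← hR] at hL
          linarith
        have h2 : ∀ a b c d : ℝ, K * a + b ≤ K * c + d → a + b / K ≤ c + d / K := by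
          intro a b c d h
          have h3 := div_le_div_of_nonneg_right h hK0.le
          rwa [add_div, add_div, mul_div_cancel_left₀ _ hK0.ne',
            mul_div_cancel_left₀ _ hK0.ne'] at h3
        exact h2 _ _ _ _ this
      · obtain ⟨hi, hq⟩ := (hS _).mp hx
        have hq2 := abs_le.mp hq
        have hq' : |q + zz b| ≤ Qb := by
          cases b
          · have := hc.2 rfl
            simp only [zz] at *
            exact abs_le.mpr ⟨by simp; omega, by simp; omega⟩
          · have := hc.1 rfl
            simp only [zz] at *
            exact abs_le.mpr ⟨by simp; omega, by simp; omega⟩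
        exact sub_le_sub_right (huu (i, q + zz b) ((hS _).mpr ⟨hi, hq'⟩)) _)
    D
    (by
      rintro (⟨la, lb⟩ | b) x hx hc
      · simp only [F, hGc]
        have := (abs_le.mp (hC' x hx la lb)).2
        have : ((w x.1 x.2 + δt * ftil σ φ Δ lamA lamB la lb ((x.1 : ℝ) * δα) x.2) - D) / δt / K
          ≤ 0 := div_nonpos_of_nonpos_of_nonneg
            (div_nonpos_of_nonpos_of_nonneg (by linarith) hδt.le) hK0.le
        linarith
      · simp only [F]
        linarith)
    (by linarith)
    (by
      intro x hx
      refine ⟨Sum.inl (false, false), by simp [adm], ?_⟩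
      simp only [F, hGc]
      have := (abs_le.mp (hC' x hx false false)).1
      have : 0 ≤ ((w x.1 x.2 + δt * ftil σ φ Δ lamA lamB false false ((x.1 : ℝ) * δα) x.2) - -D)
          / δt / K := div_nonneg (div_nonneg (by linarith) hδt.le) hK0.le
      linarith)
  refine ⟨fun i q => v (i, q), fun i q hi hq => ?_⟩
  obtain ⟨h1, h2⟩ := hv (i, q) ((hS _).mpr ⟨hi, hq⟩)
  refine ⟨fun la lb ha hb => ?_, fun z hz hz1 hz2 => ?_, ?_⟩
  · have h := h1 (Sum.inl (la, lb)) ⟨ha, hb⟩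
    simp only [F] at h
    have h' : G la lb (i, q) v / K ≤ 0 := by linarith
    rw [div_le_iff₀ hK0, zero_mul] at h'
    exact h'
  · rcases hz with rfl | rfl
    · have h := h1 (Sum.inr true) ⟨fun _ => hz1 rfl, by simp⟩
      simp only [F, zz, if_true] at h
      linarith
    · have h := h1 (Sum.inr false) ⟨by simp, fun _ => hz2 rfl⟩
      simp only [F, zz] at h
      simp at h ⊢
      linarith
  · obtain ⟨(⟨la, lb⟩ | b), hc, e⟩ := h2
    · left
      refine ⟨la, lb, hc.1, hc.2, ?_⟩
      simp only [F] at e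
      have h' : G la lb (i, q) v / K = 0 := by linarith
      rw [div_eq_zero_iff] at h'
      exact h'.resolve_right hK0.ne'
    · right
      cases b
      · refine ⟨-1, Or.inr rfl, by simp, fun _ => hc.2 rfl, ?_⟩
        simp [F, zz] at e ⊢
        linarith
      · refine ⟨1, Or.inl rfl, fun _ => hc.1 rfl, by simp, ?_⟩
        simp [F, zz] at e ⊢
        linarith

/-- Existence and uniqueness for the implicit scheme: for every choice of grid parameters
`δt = T/N > 0` and `δα = A/Nα > 0` there exists exactly one grid function `v` satisfying the
implicit scheme (uniqueness is, of course, uniqueness of the values at the grid points). -/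
theorem scheme_exists_unique
    (T A δt δα σ Δ ε Υ lamA lamB k ρ γa γb φ ψ : ℝ) (N Nα : ℕ) (Qb : ℤ)
    (hT : 0 < T) (hA : 0 < A) (hQ : 1 ≤ Qb) (hσ : 0 < σ) (hΔ : 0 ≤ Δ) (hε : 0 < ε)
    (hΥ : Υ = Δ + ε) (hlamA : 0 < lamA) (hlamB : 0 < lamB) (hk : 0 < k) (hρ : 0 < ρ)
    (hγa : 0 < γa) (hγb : 0 < γb) (hφ : 0 < φ) (hψ : 0 < ψ)
    (hN : 0 < N) (hδt : δt = T / N) (hδα : 0 < δα) (hNα : (Nα : ℝ) * δα = A) :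
    ∃ v : ℕ → ℤ → ℤ → ℝ,
      SchemeSol δt δα σ Δ Υ lamA lamB k ρ γa γb φ ψ N Nα Qb v ∧
      ∀ v' : ℕ → ℤ → ℤ → ℝ,
        SchemeSol δt δα σ Δ Υ lamA lamB k ρ γa γb φ ψ N Nα Qb v' →
        ∀ n : ℕ, n ≤ N → ∀ i q : ℤ, |i| ≤ (Nα : ℤ) → |q| ≤ Qb →
          v' n i q = v n i q := by
  have hδt0 : 0 < δt := by rw [hδt]; positivity
  have hΥ0 : 0 < Υ := by rw [hΥ]; linarith
  have hNα0 : 0 < Nα := by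
    rcases Nat.eq_zero_or_pos Nα with e | e
    · rw [e] at hNα; simp at hNα; linarith
    · exact e
  choose Φ hΦ using step_exists_aux δt δα σ Δ Υ lamA lamB k ρ γa γb φ Nα Qb hδt0 hδα hNα0 hΥ0
    hk hlamA hlamB
  let g : ℤ → ℤ → ℝ := fun _ q => -Υ * |(q : ℝ)| - ψ * (q : ℝ) ^ 2
  let r : ℕ → ℤ → ℤ → ℝ := fun m => Nat.rec g (fun _ w => Φ w) m
  have hr : ∀ m, r (m + 1) = Φ (r m) := fun m => rfl
  have hstep : ∀ n, n < N → StepSol δt δα σ Δ Υ lamA lamB k ρ γa γb φ Nα Qb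
      (r (N - (n + 1))) (r (N - n)) := by
    intro n hn
    have e : N - n = (N - (n + 1)) + 1 := by omega
    rw [e, hr]
    exact hΦ _
  refine ⟨fun n => r (N - n), ⟨?_, ?_⟩, ?_⟩
  · intro i q _ _
    simp only [Nat.sub_self]
    rfl
  · intro n hn
    exact hstep n hn
  · intro v' hv'
    have main : ∀ m, m ≤ N → ∀ i q : ℤ, |i| ≤ (Nα : ℤ) → |q| ≤ Qb →
        v' (N - m) i q = r m i q := by
      intro m
      induction m with
      | zero =>
        intro _ i q hi hq
        exact hv'.1 i q hi hq
      | succ m ih =>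
        intro hm i q hi hq
        have ih' := ih (by omega)
        have e : N - m = N - (m + 1) + 1 := by omega
        have s1 : StepSol δt δα σ Δ Υ lamA lamB k ρ γa γb φ Nα Qb
            (v' (N - m)) (v' (N - (m + 1))) := by
          rw [e]
          exact hv'.2 (N - (m + 1)) (by omega)
        have s2 := hΦ (r m)
        refine le_antisymm ?_ ?_
        · exact step_le_aux δt δα σ Δ Υ lamA lamB k ρ γa γb φ Nα Qb hδt0 hδα hNα0 hQ hΥ0 hk
            hlamA hlamB _ _ _ _ ih' s1 s2 i q hi hq
        · exact step_le_aux δt δα σ Δ Υ lamA lamB k ρ γa γb φ Nα Qb hδt0 hδα hNα0 hQ hΥ0 hk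
            hlamA hlamB _ _ _ _ (fun i q hi hq => (ih' i q hi hq).symm) s2 s1 i q hi hq
    intro n hn i q hi hq
    have := main (N - n) (by omega) i q hi hq
    rwa [Nat.sub_sub_self hn] at this
end
end

section
/- Consistency of the implicit scheme: let φ : [0,T] × ℝ × (ℤ ∩ [−Q̄, Q̄]) → ℝ be bounded and such that for each q the map (t, α) ↦ φ(t, α, q) is continuously differentiable in t and twice continuously differentiable in α. Fix (t, α, q) with t ∈ [0, T), α ∈ (−A, A), α + γᵃ < A, α − γᵇ > −A and |q| < Q̄. For grid parameters δ = (δt, δα), grid points (t′, α′) = (t_n, αᵢ) with t_n < T, and ξ ∈ ℝ, set S(δ, (t′, α′, q), ξ) := max( max over lᵃ, lᵇ ∈ {0,1} of ( (φ(t′+δt, α′, q) − φ(t′, α′, q))/δt + L_δ^{lᵃ,lᵇ}(φ + ξ)(t′, α′, q) + f̃^{lᵃ,lᵇ}(t′, α′, q) ), max over z ∈ {1, −1} of ( B_δ^z (φ + ξ)(t′, α′, q) − Υ ) ). Then, in the joint limit (δt, δα) → (0, 0), (t′, α′) → (t, α) along grid points, ξ → 0, S(δ, (t′, α′, q), ξ)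 converges to max( max over lᵃ, lᵇ ∈ {0,1} of ( ∂ₜφ(t, α, q) + L^{lᵃ,lᵇ}φ(t, α, q) + f̃^{lᵃ,lᵇ}(t, α, q) ), max over z ∈ {1, −1} of ( φ(t, α, q + z) − Υ − φ(t, α, q) ) ), where L^{lᵃ,lᵇ}φ(t, α, q) = −k·α·∂_αφ(t, α, q) + (ρ²/2)·∂²_{αα}φ(t, α, q) + λᵃ·(1_{lᵃ=0}·φ(t, α+γᵃ, q) + 1_{lᵃ=1}·φ(t, α+γᵃ, q−1) − φ(t, α, q)) + λᵇ·(1_{lᵇ=0}·φ(t, α−γᵇ, q) + 1_{lᵇ=1}·φ(t, α−γᵇ, q+1) − φ(t, α, q)). -/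
open Finset

noncomputable section

/-- The value `S(δ, (t′, α′, q), ξ)` of the implicit scheme applied to the shifted test
function `φ + ξ` at the grid node `(t′, α′) = (n·δt, i·δα)`: the maximum over all
`lᵃ, lᵇ ∈ {0,1}` of the limit-order branch and over all `z ∈ {1, −1}` of the impulse branch. -/
def consistS (δt δα σ Δ Υ lamA lamB k ρ γa γb φp : ℝ) (Nα : ℕ)
    (u : ℝ → ℝ → ℤ → ℝ) (n : ℕ) (i : ℤ) (q : ℤ) (ξ : ℝ) : ℝ :=
  let tp : ℝ := (n : ℝ) * δt
  let αp : ℝ := (i : ℝ) * δα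
  let slice : ℤ → ℤ → ℝ := fun j q' => u tp ((j : ℝ) * δα) q' + ξ
  let lim : Bool → Bool → ℝ := fun la lb =>
    (u (tp + δt) αp q - u tp αp q) / δt
      + Lδ δα k ρ lamA lamB γa γb Nα la lb slice i q
      + ftil σ φp Δ lamA lamB la lb αp q
  max (max (max (lim false false) (lim false true)) (max (lim true false) (lim true true)))
    (max (slice i (q + 1) - slice i q - Υ) (slice i (q - 1) - slice i q - Υ))

/-- The limiting value: the maximum over `lᵃ, lᵇ ∈ {0,1}` of
`∂ₜφ + L^{lᵃ,lᵇ}φ + f̃^{lᵃ,lᵇ}` and over `z ∈ {1, −1}` of `φ(t, α, q + z) − Υ − φ(t, α, q)`,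
where `L^{lᵃ,lᵇ}φ = −k·α·∂_αφ + (ρ²/2)·∂²_{αα}φ + λᵃ·(…) + λᵇ·(…)`. -/
def consistTarget (σ Δ Υ lamA lamB k ρ γa γb φp : ℝ)
    (u ut ua uaa : ℝ → ℝ → ℤ → ℝ) (t α : ℝ) (q : ℤ) : ℝ :=
  let lim : Bool → Bool → ℝ := fun la lb =>
    ut t α q
      + (-(k * α) * ua t α q + ρ ^ 2 / 2 * uaa t α q
        + lamA * ((if la then u t (α + γa) (q - 1) else u t (α + γa) q) - u t α q)
        + lamB * ((if lb then u t (α - γb) (q + 1) else u t (α - γb) q) - u t α q))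
      + ftil σ φp Δ lamA lamB la lb α q
  max (max (max (lim false false) (lim false true)) (max (lim true false) (lim true true)))
    (max (u t α (q + 1) - Υ - u t α q) (u t α (q - 1) - Υ - u t α q))

open Filter Topology

lemma slope_lim (w w' : ℝ → ℝ → ℝ) (hw : ∀ p x, HasDerivAt (fun b => w p b) (w' p x) x)
    (hc : Continuous fun z : ℝ × ℝ => w' z.1 z.2) (p x y : ℕ → ℝ) (p0 x0 : ℝ)
    (hp : Tendsto p atTop (𝓝 p0)) (hx : Tendsto x atTop (𝓝 x0)) (hy : Tendsto y atTop (𝓝 x0))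
    (hlt : ∀ m, x m < y m) :
    Tendsto (fun m => (w (p m) (y m) - w (p m) (x m)) / (y m - x m)) atTop (𝓝 (w' p0 x0)) := by
  have h : ∀ m, ∃ c, x m < c ∧ c < y m ∧
      w' (p m) c = (w (p m) (y m) - w (p m) (x m)) / (y m - x m) := by
    intro m
    obtain ⟨c, hc, h⟩ := exists_hasDerivAt_eq_slope (fun b => w (p m) b) (fun b => w' (p m) b)
      (hlt m) (fun z _ => (hw (p m) z).continuousAt.continuousWithinAt) (fun z _ => hw (p m) z)
    exact ⟨c, hc.1, hc.2, h⟩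
  choose c h1 h2 h3 using h
  have hcl : Tendsto c atTop (𝓝 x0) :=
    tendsto_of_tendsto_of_tendsto_of_le_of_le hx hy (fun m => (h1 m).le) (fun m => (h2 m).le)
  have := (hc.tendsto (p0, x0)).comp (hp.prodMk_nhds hcl)
  exact this.congr h3

lemma second_lim (w w' w'' : ℝ → ℝ → ℝ) (hw : ∀ p x, HasDerivAt (fun b => w p b) (w' p x) x)
    (hw' : ∀ p x, HasDerivAt (fun b => w' p b) (w'' p x) x)
    (hc : Continuous fun z : ℝ × ℝ => w'' z.1 z.2) (p x d : ℕ → ℝ) (p0 x0 : ℝ)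
    (hp : Tendsto p atTop (𝓝 p0)) (hx : Tendsto x atTop (𝓝 x0)) (hd : Tendsto d atTop (𝓝 0))
    (hpos : ∀ m, 0 < d m) :
    Tendsto (fun m => (w (p m) (x m + d m) - 2 * w (p m) (x m) + w (p m) (x m - d m)) / d m ^ 2)
      atTop (𝓝 (w'' p0 x0)) := by
  have h : ∀ m, ∃ c, 0 < c ∧ c < d m ∧
      (w' (p m) (x m + c) - w' (p m) (x m - c)) / ((x m + c) - (x m - c)) =
      (w (p m) (x m + d m) - 2 * w (p m) (x m) + w (p m) (x m - d m)) / d m ^ 2 := by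
    intro m
    have hf : ∀ s, HasDerivAt (fun s => w (p m) (x m + s) + w (p m) (x m - s))
        (w' (p m) (x m + s) - w' (p m) (x m - s)) s := by
      intro s
      have a1 := (hw (p m) (x m + s)).comp s ((hasDerivAt_id s).const_add (x m))
      have a2 := (hw (p m) (x m - s)).comp s ((hasDerivAt_id s).const_sub (x m))
      exact (a1.add a2).congr_deriv (by ring)
    have hg : ∀ s : ℝ, HasDerivAt (fun s : ℝ => s ^ 2) (2 * s) s := by
      intro s
      simpa using hasDerivAt_pow 2 s
    obtain ⟨c, hc, h⟩ := exists_ratio_hasDerivAt_eq_ratio_slope _ _ (hpos m)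
      (fun z _ => (hf z).continuousAt.continuousWithinAt) (fun z _ => hf z)
      _ _ (fun z _ => (hg z).continuousAt.continuousWithinAt) (fun z _ => hg z)
    refine ⟨c, hc.1, hc.2, ?_⟩
    have hc0 := hc.1
    have hd0 := hpos m
    rw [div_eq_div_iff (by linarith) (by positivity)]
    simp only [add_zero, sub_zero] at h
    linear_combination h
  choose c h1 h2 h3 using h
  have hcl : Tendsto c atTop (𝓝 0) :=
    tendsto_of_tendsto_of_tendsto_of_le_of_le tendsto_const_nhds hd
      (fun m => (h1 m).le) (fun m => (h2 m).le)
  have hl : Tendsto (fun m => x m - c m) atTop (𝓝 x0) := by simpa using hx.sub hcl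
  have hr : Tendsto (fun m => x m + c m) atTop (𝓝 x0) := by simpa using hx.add hcl
  exact (slope_lim w' w'' hw' hc p _ _ p0 x0 hp hl hr
    (fun m => by linarith [h1 m])).congr h3

lemma interp_spec (δ A : ℝ) (N : ℕ) (hδ : 0 < δ) (hA : 0 < A) (hN : (N : ℝ) * δ = A)
    (f : ℤ → ℝ) (a : ℝ) :
    ∃ (θ : ℝ) (j : ℤ), 0 ≤ θ ∧ θ ≤ 1 ∧ (j : ℝ) * δ = max (-A) (min A a) - θ * δ ∧
      interp δ N f a = (1 - θ) * f j + θ * f (j + 1) := by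
  set β : ℝ := max (-A) (min A a) with hβ
  have hb : β ≤ A := max_le (by linarith) (min_le_left _ _)
  have hbd : β / δ ≤ N := by rw [div_le_iff₀ hδ, hN]; exact hb
  refine ⟨β / δ - ((min ⌊β / δ⌋ ((N : ℤ) - 1) : ℤ) : ℝ), min ⌊β / δ⌋ ((N : ℤ) - 1), ?_, ?_, ?_, ?_⟩
  · have : ((min ⌊β / δ⌋ ((N : ℤ) - 1) : ℤ) : ℝ) ≤ (⌊β / δ⌋ : ℝ) := by
      exact_mod_cast min_le_left _ _
    linarith [Int.floor_le (β / δ)]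
  · rcases le_total ⌊β / δ⌋ ((N : ℤ) - 1) with h | h
    · rw [min_eq_left h]; linarith [Int.lt_floor_add_one (β / δ)]
    · rw [min_eq_right h]; push_cast; linarith
  · field_simp; ring
  · simp only [interp, hN, ← hβ]

lemma interp_lim (w : ℝ → ℝ → ℝ) (hc : Continuous fun z : ℝ × ℝ => w z.1 z.2)
    (p y δ ξ : ℕ → ℝ) (N : ℕ → ℕ) (A p0 x0 : ℝ) (hA : 0 < A)
    (hδ : ∀ m, 0 < δ m) (hN : ∀ m, (N m : ℝ) * δ m = A)
    (hp : Tendsto p atTop (𝓝 p0)) (hy : Tendsto y atTop (𝓝 x0))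
    (hd : Tendsto δ atTop (𝓝 0)) (hξ : Tendsto ξ atTop (𝓝 0))
    (h1 : -A < x0) (h2 : x0 < A) :
    Tendsto (fun m => interp (δ m) (N m) (fun j => w (p m) ((j : ℝ) * δ m) + ξ m) (y m)) atTop
      (𝓝 (w p0 x0)) := by
  choose θ j t0 t1 hj he using fun m => interp_spec (δ m) A (N m) (hδ m) hA (hN m)
    (fun j => w (p m) ((j : ℝ) * δ m) + ξ m) (y m)
  have hβ : Tendsto (fun m => max (-A) (min A (y m))) atTop (𝓝 x0) := by
    have : Tendsto (fun m => max (-A) (min A (y m))) atTop (𝓝 (max (-A) (min A x0))) :=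
      tendsto_const_nhds.max (tendsto_const_nhds.min hy)
    rwa [min_eq_right h2.le, max_eq_right h1.le] at this
  have hθ : Tendsto (fun m => θ m * δ m) atTop (𝓝 0) :=
    tendsto_of_tendsto_of_tendsto_of_le_of_le tendsto_const_nhds hd
      (fun m => mul_nonneg (t0 m) (hδ m).le)
      (fun m => by simpa using mul_le_mul_of_nonneg_right (t1 m) (hδ m).le)
  have hj1 : Tendsto (fun m => (j m : ℝ) * δ m) atTop (𝓝 x0) := by
    simp only [hj]; simpa using hβ.sub hθ
  have hj2 : Tendsto (fun m => ((j m + 1 : ℤ) : ℝ) * δ m) atTop (𝓝 x0) := by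
    have := hj1.add hd
    rw [add_zero] at this
    exact this.congr (fun m => by push_cast; ring)
  have f1 : Tendsto (fun m => w (p m) ((j m : ℝ) * δ m) + ξ m) atTop (𝓝 (w p0 x0)) := by
    simpa using ((hc.tendsto (p0, x0)).comp (hp.prodMk_nhds hj1)).add hξ
  have f2 : Tendsto (fun m => w (p m) (((j m + 1 : ℤ) : ℝ) * δ m) + ξ m) atTop
      (𝓝 (w p0 x0)) := by
    simpa using ((hc.tendsto (p0, x0)).comp (hp.prodMk_nhds hj2)).add hξ
  have g1 := f1.min f2
  have g2 := f1.max f2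
  rw [min_self] at g1
  rw [max_self] at g2
  apply tendsto_of_tendsto_of_tendsto_of_le_of_le g1 g2
  · intro m
    simp only [he]
    set a := w (p m) ((j m : ℝ) * δ m) + ξ m
    set b := w (p m) (((j m + 1 : ℤ) : ℝ) * δ m) + ξ m
    nlinarith [min_le_left a b, min_le_right a b, t0 m, t1 m,
      mul_nonneg (t0 m) (sub_nonneg.2 (min_le_right a b)),
      mul_nonneg (sub_nonneg.2 (t1 m)) (sub_nonneg.2 (min_le_left a b))]
  · intro m
    simp only [he]
    set a := w (p m) ((j m : ℝ) * δ m) + ξ m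
    set b := w (p m) (((j m + 1 : ℤ) : ℝ) * δ m) + ξ m
    nlinarith [mul_nonneg (t0 m) (sub_nonneg.2 (le_max_right a b)),
      mul_nonneg (sub_nonneg.2 (t1 m)) (sub_nonneg.2 (le_max_left a b))]

lemma interp_grid (δ A : ℝ) (N : ℕ) (hδ : 0 < δ) (hA : 0 < A) (hN : (N : ℝ) * δ = A)
    (f : ℤ → ℝ) (j : ℤ) (hj : |j| ≤ (N : ℤ)) (a : ℝ) (ha : a = (j : ℝ) * δ) :
    interp δ N f a = f j := by
  have hj' := abs_le.1 hj
  have l1 : (-(N : ℝ)) ≤ j := by exact_mod_cast hj'.1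
  have l2 : (j : ℝ) ≤ N := by exact_mod_cast hj'.2
  have hb : max (-A) (min A a) = (j : ℝ) * δ := by
    rw [ha, ← hN, min_eq_right (by nlinarith), max_eq_right (by nlinarith)]
  have hb2 : (j : ℝ) * δ / δ = j := by field_simp
  simp only [interp, hN, hb, hb2, Int.floor_intCast]
  rcases le_or_gt j ((N : ℤ) - 1) with h | h
  · rw [min_eq_left h]; simp
  · have : j = N := by omega
    subst this
    rw [min_eq_right h.le]; simp

/-- Consistency of the implicit scheme: for a bounded test function `φ = u` that is `C¹` in
`t` and `C²` in `α` (with jointly continuous derivatives `ut = ∂ₜu`, `ua = ∂_αu`,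
`uaa = ∂²_{αα}u`), at every point `(t, α, q)` with `t ∈ [0, T)`, `α ∈ (−A, A)`,
`α + γᵃ < A`, `α − γᵇ > −A` and `|q| < Q̄`, the scheme value `S(δ, (t′, α′, q), φ(t′,α′,q)+ξ)`
converges, in the joint limit `(δt, δα) → (0, 0)`, `(t′, α′) → (t, α)` along grid points,
`ξ → 0`, to the value of the HJBQVI operator at `(t, α, q)`. -/
theorem scheme_consistency
    (T A σ Δ ε Υ lamA lamB k ρ γa γb φp ψ : ℝ) (Qb : ℤ)
    (hT : 0 < T) (hA : 0 < A) (hQ : 1 ≤ Qb) (hσ : 0 < σ) (hΔ : 0 ≤ Δ) (hε : 0 < ε)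
    (hΥ : Υ = Δ + ε) (hlamA : 0 < lamA) (hlamB : 0 < lamB) (hk : 0 < k) (hρ : 0 < ρ)
    (hγa : 0 < γa) (hγb : 0 < γb) (hφp : 0 < φp) (hψ : 0 < ψ)
    (u ut ua uaa : ℝ → ℝ → ℤ → ℝ)
    (hbdd : ∃ C : ℝ, ∀ (t' α' : ℝ) (q' : ℤ), |u t' α' q'| ≤ C)
    (hut : ∀ (t' α' : ℝ) (q' : ℤ), HasDerivAt (fun s => u s α' q') (ut t' α' q') t')
    (hua : ∀ (t' α' : ℝ) (q' : ℤ), HasDerivAt (fun b => u t' b q') (ua t' α' q') α')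
    (huaa : ∀ (t' α' : ℝ) (q' : ℤ), HasDerivAt (fun b => ua t' b q') (uaa t' α' q') α')
    (hcu : ∀ q' : ℤ, Continuous fun p : ℝ × ℝ => u p.1 p.2 q')
    (hcut : ∀ q' : ℤ, Continuous fun p : ℝ × ℝ => ut p.1 p.2 q')
    (hcua : ∀ q' : ℤ, Continuous fun p : ℝ × ℝ => ua p.1 p.2 q')
    (hcuaa : ∀ q' : ℤ, Continuous fun p : ℝ × ℝ => uaa p.1 p.2 q')
    (t α : ℝ) (q : ℤ)
    (ht0 : 0 ≤ t) (htT : t < T) (hαl : -A < α) (hαr : α < A)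
    (hαγa : α + γa < A) (hαγb : -A < α - γb) (hq : |q| < Qb) :
    ∀ e : ℝ, 0 < e → ∃ η : ℝ, 0 < η ∧
      ∀ (δt δα ξ : ℝ) (N Nα n : ℕ) (i : ℤ),
        0 < N → δt = T / N → 0 < δα → (Nα : ℝ) * δα = A →
        n < N → |i| ≤ (Nα : ℤ) →
        δt < η → δα < η → |ξ| < η →
        |(n : ℝ) * δt - t| < η → |(i : ℝ) * δα - α| < η →
        |consistS δt δα σ Δ Υ lamA lamB k ρ γa γb φp Nα u n i q ξ
            - consistTarget σ Δ Υ lamA lamB k ρ γa γb φp u ut ua uaa t α q| < e := by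
  by_contra hcon
  push Not at hcon
  obtain ⟨e, he, hcon⟩ := hcon
  choose δt δα ξ N Nα n i hN hδt hδα hNα hn hi c1 c2 c3 c4 c5 c6 using
    fun m : ℕ => hcon (1 / ((m : ℝ) + 1)) Nat.one_div_pos_of_nat
  have hz : Tendsto (fun m : ℕ => 1 / ((m : ℝ) + 1)) atTop (𝓝 0) :=
    tendsto_one_div_add_atTop_nhds_zero_nat
  have hδt0 : ∀ m, 0 < δt m := fun m => by
    rw [hδt m]; exact div_pos hT (by exact_mod_cast hN m)
  have Tδt : Tendsto δt atTop (𝓝 0) :=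
    tendsto_of_tendsto_of_tendsto_of_le_of_le tendsto_const_nhds hz
      (fun m => (hδt0 m).le) (fun m => (c1 m).le)
  have Tδα : Tendsto δα atTop (𝓝 0) :=
    tendsto_of_tendsto_of_tendsto_of_le_of_le tendsto_const_nhds hz
      (fun m => (hδα m).le) (fun m => (c2 m).le)
  have Tξ : Tendsto ξ atTop (𝓝 0) := squeeze_zero_norm (fun m => (c3 m).le) hz
  have Tt : Tendsto (fun m => (n m : ℝ) * δt m) atTop (𝓝 t) :=
    tendsto_sub_nhds_zero_iff.1 (squeeze_zero_norm (fun m => (c4 m).le) hz)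
  have Ta : Tendsto (fun m => (i m : ℝ) * δα m) atTop (𝓝 α) :=
    tendsto_sub_nhds_zero_iff.1 (squeeze_zero_norm (fun m => (c5 m).le) hz)
  have Tt' : Tendsto (fun m => (n m : ℝ) * δt m + δt m) atTop (𝓝 t) := by
    simpa using Tt.add Tδt
  have Tap : Tendsto (fun m => (i m : ℝ) * δα m + δα m) atTop (𝓝 α) := by
    simpa using Ta.add Tδα
  have Tam : Tendsto (fun m => (i m : ℝ) * δα m - δα m) atTop (𝓝 α) := by
    simpa using Ta.sub Tδα
  -- interior nodes
  have hint : ∀ᶠ m in atTop, |i m| < (Nα m : ℤ) := by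
    filter_upwards [Ta.eventually_lt_const hαr, Ta.eventually_const_lt hαl] with m h1 h2
    rw [← hNα m] at h1 h2
    have h1' : (i m : ℝ) < Nα m := lt_of_mul_lt_mul_right h1 (hδα m).le
    have h2' : -(Nα m : ℝ) < i m := by
      rw [← neg_mul] at h2
      exact lt_of_mul_lt_mul_right h2 (hδα m).le
    exact abs_lt.2 ⟨by exact_mod_cast h2', by exact_mod_cast h1'⟩
  -- values
  have Tu : ∀ q', Tendsto (fun m => u ((n m : ℝ) * δt m) ((i m : ℝ) * δα m) q' + ξ m) atTop
      (𝓝 (u t α q')) := fun q' => by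
    simpa using (((hcu q').tendsto (t, α)).comp (Tt.prodMk_nhds Ta)).add Tξ
  -- time derivative
  have Dt : Tendsto (fun m => (u ((n m : ℝ) * δt m + δt m) ((i m : ℝ) * δα m) q
      - u ((n m : ℝ) * δt m) ((i m : ℝ) * δα m) q) / δt m) atTop (𝓝 (ut t α q)) := by
    have := slope_lim (fun b s => u s b q) (fun b s => ut s b q) (fun b s => hut s b q)
      ((hcut q).comp continuous_swap) _ _ _ α t Ta Tt Tt' (fun m => by linarith [hδt0 m])
    simpa using this
  have Dp := slope_lim (fun s b => u s b q) (fun s b => ua s b q) (fun s b => hua s b q)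
      (hcua q) _ _ _ t α Tt Ta Tap (fun m => by linarith [hδα m])
  have Dm := slope_lim (fun s b => u s b q) (fun s b => ua s b q) (fun s b => hua s b q)
      (hcua q) _ _ _ t α Tt Tam Ta (fun m => by linarith [hδα m])
  have D2 := second_lim (fun s b => u s b q) (fun s b => ua s b q) (fun s b => uaa s b q)
      (fun s b => hua s b q) (fun s b => huaa s b q) (hcuaa q) _ _ _ t α Tt Ta Tδα hδα
  have Ia : ∀ q', Tendsto (fun m => interp (δα m) (Nα m)
      (fun j => u ((n m : ℝ) * δt m) ((j : ℝ) * δα m) q' + ξ m) ((i m : ℝ) * δα m + γa)) atTop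
      (𝓝 (u t (α + γa) q')) := fun q' =>
    interp_lim (fun s b => u s b q') (hcu q') _ _ δα ξ Nα A t (α + γa) hA hδα hNα Tt
      (Ta.add_const γa) Tδα Tξ (by linarith) hαγa
  have Ib : ∀ q', Tendsto (fun m => interp (δα m) (Nα m)
      (fun j => u ((n m : ℝ) * δt m) ((j : ℝ) * δα m) q' + ξ m) ((i m : ℝ) * δα m - γb)) atTop
      (𝓝 (u t (α - γb) q')) := fun q' =>
    interp_lim (fun s b => u s b q') (hcu q') _ _ δα ξ Nα A t (α - γb) hA hδα hNα Tt
      (Ta.sub_const γb) Tδα Tξ hαγb (by linarith)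
  have TL : ∀ la lb, Tendsto (fun m => Lδ (δα m) k ρ lamA lamB γa γb (Nα m) la lb
      (fun j q' => u ((n m : ℝ) * δt m) ((j : ℝ) * δα m) q' + ξ m) (i m) q) atTop
      (𝓝 (-(k * α) * ua t α q + ρ ^ 2 / 2 * uaa t α q
        + lamA * ((if la then u t (α + γa) (q - 1) else u t (α + γa) q) - u t α q)
        + lamB * ((if lb then u t (α - γb) (q + 1) else u t (α - γb) q) - u t α q))) := by
    intro la lb
    have Ia' : Tendsto (fun m => if la then interp (δα m) (Nα m)
        (fun j => u ((n m : ℝ) * δt m) ((j : ℝ) * δα m) (q - 1) + ξ m) ((i m : ℝ) * δα m + γa)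
        else interp (δα m) (Nα m)
        (fun j => u ((n m : ℝ) * δt m) ((j : ℝ) * δα m) q + ξ m) ((i m : ℝ) * δα m + γa)) atTop
        (𝓝 (if la then u t (α + γa) (q - 1) else u t (α + γa) q)) := by
      cases la
      · simpa using Ia q
      · simpa using Ia (q - 1)
    have Ib' : Tendsto (fun m => if lb then interp (δα m) (Nα m)
        (fun j => u ((n m : ℝ) * δt m) ((j : ℝ) * δα m) (q + 1) + ξ m) ((i m : ℝ) * δα m - γb)
        else interp (δα m) (Nα m)
        (fun j => u ((n m : ℝ) * δt m) ((j : ℝ) * δα m) q + ξ m) ((i m : ℝ) * δα m - γb)) atTop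
        (𝓝 (if lb then u t (α - γb) (q + 1) else u t (α - γb) q)) := by
      cases lb
      · simpa using Ib q
      · simpa using Ib (q + 1)
    have P1 := ((Ta.neg.max (tendsto_const_nhds (x := (0 : ℝ)))).const_mul k).mul Dp
    have P2 := ((Ta.max (tendsto_const_nhds (x := (0 : ℝ)))).const_mul k).mul Dm
    have P := (((P1.sub P2).add (D2.const_mul (ρ ^ 2 / 2))).add
      ((Ia'.sub (Tu q)).const_mul lamA)).add ((Ib'.sub (Tu q)).const_mul lamB)
    have hmax : k * max (-α) 0 * ua t α q - k * max α 0 * ua t α q = -(k * α) * ua t α q := by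
      rcases le_total 0 α with h | h
      · rw [max_eq_right (by linarith), max_eq_left h]; ring
      · rw [max_eq_left (by linarith), max_eq_right h]; ring
    rw [hmax] at P
    refine P.congr' ?_
    filter_upwards [hint] with m hm
    have hm' := abs_lt.1 hm
    have e1 : ∀ f : ℤ → ℝ, interp (δα m) (Nα m) f ((i m : ℝ) * δα m + δα m) = f (i m + 1) :=
      fun f => interp_grid (δα m) A (Nα m) (hδα m) hA (hNα m) f (i m + 1)
        (abs_le.2 ⟨by omega, by omega⟩) _ (by push_cast; ring)
    have e2 : ∀ f : ℤ → ℝ, interp (δα m) (Nα m) f ((i m : ℝ) * δα m - δα m) = f (i m - 1) :=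
      fun f => interp_grid (δα m) A (Nα m) (hδα m) hA (hNα m) f (i m - 1)
        (abs_le.2 ⟨by omega, by omega⟩) _ (by push_cast; ring)
    have e3 : ((i m + 1 : ℤ) : ℝ) * δα m = (i m : ℝ) * δα m + δα m := by push_cast; ring
    have e4 : ((i m - 1 : ℤ) : ℝ) * δα m = (i m : ℝ) * δα m - δα m := by push_cast; ring
    have e5 : (i m : ℝ) * δα m + δα m - (i m : ℝ) * δα m = δα m := by ring
    have e6 : (i m : ℝ) * δα m - ((i m : ℝ) * δα m - δα m) = δα m := by ring
    simp only [Lδ, e1, e2, e3, e4, e5, e6, if_pos hm]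
    ring
  have TF : ∀ la lb, Tendsto (fun m => ftil σ φp Δ lamA lamB la lb ((i m : ℝ) * δα m) q) atTop
      (𝓝 (ftil σ φp Δ lamA lamB la lb α q)) := by
    intro la lb
    have : Continuous fun a => ftil σ φp Δ lamA lamB la lb a q := by
      unfold ftil; fun_prop
    exact (this.tendsto α).comp Ta
  have TT := fun la lb => (Dt.add (TL la lb)).add (TF la lb)
  have TB : ∀ q', Tendsto (fun m => (u ((n m : ℝ) * δt m) ((i m : ℝ) * δα m) q' + ξ m)
      - (u ((n m : ℝ) * δt m) ((i m : ℝ) * δα m) q + ξ m) - Υ) atTop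
      (𝓝 (u t α q' - Υ - u t α q)) := by
    intro q'
    have := ((Tu q').sub (Tu q)).sub_const Υ
    rwa [sub_right_comm] at this
  have TS : Tendsto (fun m => consistS (δt m) (δα m) σ Δ Υ lamA lamB k ρ γa γb φp (Nα m) u
      (n m) (i m) q (ξ m)) atTop
      (𝓝 (consistTarget σ Δ Υ lamA lamB k ρ γa γb φp u ut ua uaa t α q)) :=
    (((TT false false).max (TT false true)).max ((TT true false).max (TT true true))).max
      ((TB (q + 1)).max (TB (q - 1)))
  obtain ⟨m, hm⟩ := (Metric.tendsto_nhds.1 TS e he).exists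
  rw [Real.dist_eq] at hm
  exact absurd hm (not_lt.2 (c6 m))
end
end
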